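/- There exist x₀ ≥ 0 and λ₀ ≥ 0, depending only on V, and a jointly smooth function f₁ : ℝ × ℝ → ℂ² such that: (i) for every λ ∈ ℝ, f₁(·,λ) and f₂(·,λ) := the componentwise complex conjugate of f₁(·,λ) are solutions of ℋf = (1+λ²)f; (ii) for all integers k, ℓ ≥ 0 there is C_{k,ℓ} with |∂_λ^ℓ ∂ₓ^k (e^(−iλx) f₁(x,λ) − (1,0))| ≤ C_{k,ℓ} μ^(−1+k) (1+x)^ℓ e^(−γx) for all λ ∈ ℝ and all x ≥ x₀; and (iii) the same bounds hold for all x ≥ 0 whenever |λ| ≥ λ₀. -/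

import Mathlib

noncomputable section

open Real MeasureTheory

/-- The matrix Schrödinger operator `ℋ` acting on `f = (f₁, f₂) : ℝ → ℂ²`:
`ℋf = (−f₁'' + f₁ + V₁f₁ + V₂f₂, f₂'' − f₂ − V₂f₁ − V₁f₂)`. -/
def matH (V₁ V₂ : ℝ → ℝ) (f : ℝ → ℂ × ℂ) (x : ℝ) : ℂ × ℂ :=
  (-(iteratedDeriv 2 (fun y => (f y).1) x) + (f x).1
      + (V₁ x : ℂ) * (f x).1 + (V₂ x : ℂ) * (f x).2,
    iteratedDeriv 2 (fun y => (f y).2) x - (f x).2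
      - (V₂ x : ℂ) * (f x).1 - (V₁ x : ℂ) * (f x).2)

/-- `f` is a (classical, twice continuously differentiable) solution of `ℋf = z f`. -/
def IsSolution (V₁ V₂ : ℝ → ℝ) (z : ℂ) (f : ℝ → ℂ × ℂ) : Prop :=
  ContDiff ℝ 2 f ∧ ∀ x : ℝ, matH V₁ V₂ f x = z • f x

/-- The potentials `V₁, V₂` are smooth, even, and exponentially decaying with rate `γ ∈ (0,1)`,
together with all derivatives. -/
def PotentialHyp (γ : ℝ) (V₁ V₂ : ℝ → ℝ) : Prop :=
  0 < γ ∧ γ < 1 ∧ ContDiff ℝ (⊤ : ℕ∞) V₁ ∧ ContDiff ℝ (⊤ : ℕ∞) V₂ ∧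
    (∀ x, V₁ (-x) = V₁ x) ∧ (∀ x, V₂ (-x) = V₂ x) ∧
    ∀ k : ℕ, ∃ C : ℝ, ∀ x : ℝ,
      |iteratedDeriv k V₁ x| + |iteratedDeriv k V₂ x| ≤ C * Real.exp (-γ * |x|)

/-- `μ(λ) = √(λ² + 2)`. -/
def mu (lam : ℝ) : ℝ := Real.sqrt (lam ^ 2 + 2)

/-- Componentwise complex conjugation of a `ℂ²`-valued function. -/
def conj2 (f : ℝ → ℂ × ℂ) : ℝ → ℂ × ℂ :=
  fun x => (starRingEnd ℂ (f x).1, starRingEnd ℂ (f x).2)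

set_option linter.unusedVariables false

/-- Jointly continuous on `ℝ × Ω` and holomorphic in the second variable. -/
def Nice (Ω : Set ℂ) (G : ℝ → ℂ → ℂ) : Prop :=
  ContinuousOn (fun q : ℝ × ℂ => G q.1 q.2) (Set.univ ×ˢ Ω) ∧ ∀ x, DifferentiableOn ℂ (G x) Ω

namespace Nice
variable {Ω : Set ℂ} {G H : ℝ → ℂ → ℂ}

theorem add (hG : Nice Ω G) (hH : Nice Ω H) : Nice Ω (fun x z => G x z + H x z) :=
  ⟨hG.1.add hH.1, fun x => (hG.2 x).add (hH.2 x)⟩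

theorem sub (hG : Nice Ω G) (hH : Nice Ω H) : Nice Ω (fun x z => G x z - H x z) :=
  ⟨hG.1.sub hH.1, fun x => (hG.2 x).sub (hH.2 x)⟩

theorem mul (hG : Nice Ω G) (hH : Nice Ω H) : Nice Ω (fun x z => G x z * H x z) :=
  ⟨hG.1.mul hH.1, fun x => (hG.2 x).mul (hH.2 x)⟩

theorem neg (hG : Nice Ω G) : Nice Ω (fun x z => - G x z) :=
  ⟨hG.1.neg, fun x => (hG.2 x).neg⟩

theorem cexp (hG : Nice Ω G) : Nice Ω (fun x z => Complex.exp (G x z)) :=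
  ⟨hG.1.cexp, fun x => (hG.2 x).cexp⟩

theorem of_hol {h : ℂ → ℂ} (hh : DifferentiableOn ℂ h Ω) : Nice Ω (fun _ z => h z) :=
  ⟨hh.continuousOn.comp continuous_snd.continuousOn (fun _ hq => hq.2), fun _ => hh⟩

theorem const (c : ℂ) : Nice Ω (fun _ _ => c) := of_hol (differentiableOn_const c)

theorem of_cont {h : ℝ → ℂ} (hh : Continuous h) : Nice Ω (fun x _ => h x) :=
  ⟨(hh.comp continuous_fst).continuousOn, fun _ => differentiableOn_const _⟩

theorem cont_x (hG : Nice Ω G) {z : ℂ} (hz : z ∈ Ω) : Continuous (fun x => G x z) := by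
  have := hG.1.comp_continuous (f := fun x : ℝ => (x, z)) (by fun_prop) (fun x => ⟨trivial, hz⟩)
  exact this

theorem congr (hG : Nice Ω G) (h : ∀ x, ∀ z ∈ Ω, H x z = G x z) : Nice Ω H :=
  ⟨hG.1.congr (fun q hq => h q.1 q.2 hq.2), fun x => (hG.2 x).congr (fun z hz => h x z hz)⟩

/-- local bound -/
theorem bdd (hG : Nice Ω G) (hΩ : IsOpen Ω) {z : ℂ} (hz : z ∈ Ω) (a b : ℝ) :
    ∃ r > 0, ∃ C, Metric.closedBall z r ⊆ Ω ∧
      ∀ x ∈ Set.Icc a b, ∀ w ∈ Metric.closedBall z r, ‖G x w‖ ≤ C := by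
  obtain ⟨r, hr, hsub⟩ := Metric.nhds_basis_closedBall.mem_iff.1 (hΩ.mem_nhds hz)
  have hK : IsCompact (Set.Icc a b ×ˢ Metric.closedBall z r) :=
    isCompact_Icc.prod (isCompact_closedBall z r)
  obtain ⟨C, hC⟩ := hK.exists_bound_of_continuousOn
    (hG.1.mono (Set.prod_mono (Set.subset_univ _) hsub))
  exact ⟨r, hr, C, hsub, fun x hx w hw => hC (x, w) ⟨hx, hw⟩⟩

theorem deriv (hG : Nice Ω G) (hΩ : IsOpen Ω) : Nice Ω (fun x z => deriv (G x) z) := by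
  have hd : ∀ x, DifferentiableOn ℂ (fun z => _root_.deriv (G x) z) Ω :=
    fun x => (hG.2 x).deriv hΩ
  refine ⟨?_, hd⟩
  rintro ⟨x, z⟩ ⟨-, hz⟩
  have hlu : TendstoLocallyUniformlyOn G (G x) (nhds x) Ω := by
    have : ContinuousOn (Function.uncurry G) (Set.univ ×ˢ Ω) := hG.1
    rw [tendstoLocallyUniformlyOn_iff_forall_isCompact hΩ]
    intro K hK hKc
    rw [Metric.tendstoUniformlyOn_iff]
    intro e he
    obtain ⟨v, hv, h⟩ := hKc.mem_uniformity_of_prod (f := G) (q := x) (s := Set.univ)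
      (hG.1.mono (Set.prod_mono le_rfl hK)) (Set.mem_univ x) (Metric.dist_mem_uniformity he)
    rw [nhdsWithin_univ] at hv
    filter_upwards [hv] with y hy w hw
    rw [dist_comm]
    exact h y hy w hw
  have h2 := hlu.deriv (Filter.Eventually.of_forall hG.2) hΩ
  have h3 : Filter.Tendsto (fun q : ℝ × ℂ => _root_.deriv (G q.1) q.2) (nhds x ×ˢ nhdsWithin z Ω)
      (nhds (_root_.deriv (G x) z)) := by
    have h4 : TendstoLocallyUniformlyOn (fun q : ℝ × ℂ => _root_.deriv (G q.1)) (_root_.deriv (G x))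
        (nhds x ×ˢ nhdsWithin z Ω) Ω := by
      intro u hu w hw
      obtain ⟨t, ht, h⟩ := h2 u hu w hw
      exact ⟨t, ht, Filter.tendsto_fst.eventually h⟩
    exact h4.tendsto_comp ((hd x).continuousOn z hz) hz Filter.tendsto_snd
  rw [ContinuousWithinAt, nhdsWithin_prod_eq, nhdsWithin_univ]
  exact h3

theorem integral_hasDerivAt (hG : Nice Ω G) (hΩ : IsOpen Ω) {z : ℂ} (hz : z ∈ Ω) (a b : ℝ) :
    HasDerivAt (fun w => ∫ y in a..b, G y w) (∫ y in a..b, _root_.deriv (G y) z) z := by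
  obtain ⟨r, hr, C, hsub, hC⟩ := (hG.deriv hΩ).bdd hΩ hz (min a b) (max a b)
  refine (intervalIntegral.hasDerivAt_integral_of_dominated_loc_of_deriv_le
    (F := fun w y => G y w) (F' := fun w y => _root_.deriv (G y) w) (bound := fun _ => C)
    (Metric.closedBall_mem_nhds z hr) ?_ ?_ ?_ ?_ ?_ ?_).2
  · filter_upwards [hΩ.mem_nhds hz] with w hw
    exact (hG.cont_x hw).aestronglyMeasurable
  · exact (hG.cont_x hz).intervalIntegrable _ _
  · exact ((hG.deriv hΩ).cont_x hz).aestronglyMeasurable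
  · refine Filter.Eventually.of_forall fun t ht w hw => hC t ?_ w hw
    exact Set.Ioc_subset_Icc_self ht
  · exact intervalIntegrable_const
  · refine Filter.Eventually.of_forall fun t ht w hw => ?_
    exact ((hG.2 t).differentiableAt (hΩ.mem_nhds (hsub hw))).hasDerivAt

theorem integral (hG : Nice Ω G) (hΩ : IsOpen Ω) (a : ℝ) :
    Nice Ω (fun x z => ∫ y in a..x, G y z) := by
  constructor
  · have hc : Continuous (Function.uncurry (fun (w : Ω) (y : ℝ) => G y w)) := by
      have := hG.1.comp_continuous (f := fun q : Ω × ℝ => (q.2, (q.1 : ℂ))) (by fun_prop)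
        (fun q => ⟨trivial, q.1.2⟩)
      exact this
    have h2 := intervalIntegral.continuous_parametric_primitive_of_continuous
      (μ := volume) (a₀ := a) hc
    rw [continuousOn_iff_continuous_domRestrict]
    have h3 := h2.comp (f := fun q : (Set.univ ×ˢ Ω : Set (ℝ × ℂ)) =>
      ((⟨q.1.2, q.2.2⟩ : Ω), q.1.1)) (by fun_prop)
    exact h3
  · intro x z hz
    exact (hG.integral_hasDerivAt hΩ hz a x).differentiableAt.differentiableWithinAt

theorem integral_hasDerivAt_x (hG : Nice Ω G) {z : ℂ} (hz : z ∈ Ω) (a x : ℝ) :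
    HasDerivAt (fun x => ∫ y in a..x, G y z) (G x z) x :=
  intervalIntegral.integral_hasDerivAt_right ((hG.cont_x hz).intervalIntegrable _ _)
    ((hG.cont_x hz).stronglyMeasurableAtFilter _ _) (hG.cont_x hz).continuousAt

/-- swapping derivatives -/
theorem deriv_swap (hG : Nice Ω G) (hH : Nice Ω H) (hΩ : IsOpen Ω)
    (h : ∀ z ∈ Ω, ∀ x, HasDerivAt (fun x => G x z) (H x z) x) {z : ℂ} (hz : z ∈ Ω) (x : ℝ) :
    HasDerivAt (fun x => _root_.deriv (G x) z) (_root_.deriv (H x) z) x := by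
  have e : ∀ x, _root_.deriv (G x) z = _root_.deriv (G 0) z + ∫ y in (0:ℝ)..x, _root_.deriv (H y) z := by
    intro x
    have e1 : G x =ᶠ[nhds z] fun w => G 0 w + ∫ y in (0:ℝ)..x, H y w := by
      filter_upwards [hΩ.mem_nhds hz] with w hw
      rw [intervalIntegral.integral_eq_sub_of_hasDerivAt (fun y _ => h w hw y)
        ((hH.cont_x hw).intervalIntegrable _ _)]
      ring
    rw [e1.deriv_eq]
    exact (((hG.2 0).differentiableAt (hΩ.mem_nhds hz)).hasDerivAt.add
      (hH.integral_hasDerivAt hΩ hz 0 x)).deriv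
  rw [funext e]
  exact ((hH.deriv hΩ).integral_hasDerivAt_x hz 0 x).const_add _

/-- limits of locally geometrically convergent series -/
theorem tsum {d : ℕ → ℝ → ℂ → ℂ} (hd : ∀ n, Nice Ω (d n)) (hΩ : IsOpen Ω)
    (hb : ∀ x, ∀ z ∈ Ω, ∃ U ∈ nhds x, ∃ W, IsOpen W ∧ z ∈ W ∧ ∃ C : ℝ, ∀ n, ∀ y ∈ U, ∀ w ∈ W,
      ‖d n y w‖ ≤ C * (1 / 2) ^ n) :
    Nice Ω (fun x z => ∑' n, d n x z) := by
  constructor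
  · rintro ⟨x, z⟩ ⟨-, hz⟩
    obtain ⟨U, hU, W, hWo, hzW, C, hC⟩ := hb x z hz
    have hs : Summable (fun n : ℕ => C * (1 / 2 : ℝ) ^ n) := summable_geometric_two.mul_left C
    have : ContinuousOn (fun q : ℝ × ℂ => ∑' n, d n q.1 q.2) (U ×ˢ (W ∩ Ω)) := by
      refine continuousOn_tsum (fun n => (hd n).1.mono ?_) hs ?_
      · exact Set.prod_mono (Set.subset_univ _) Set.inter_subset_right
      · rintro n ⟨y, w⟩ ⟨hy, hw⟩
        exact hC n y hy w hw.1
    have h2 := this.continuousAt (x := (x, z)) (prod_mem_nhds hU ((hWo.inter hΩ).mem_nhds ⟨hzW, hz⟩))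
    exact h2.continuousWithinAt
  · intro x z hz
    obtain ⟨U, hU, W, hWo, hzW, C, hC⟩ := hb x z hz
    have hs : Summable (fun n : ℕ => C * (1 / 2 : ℝ) ^ n) := summable_geometric_two.mul_left C
    have := Complex.differentiableOn_tsum_of_summable_norm hs (F := fun n => d n x) (U := W ∩ Ω)
      (fun n => ((hd n).2 x).mono Set.inter_subset_right) (hWo.inter hΩ)
      (fun n w hw => hC n x (mem_of_mem_nhds hU) w hw.1)
    exact (this.differentiableAt ((hWo.inter hΩ).mem_nhds ⟨hzW, hz⟩)).differentiableWithinAt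

/-- holomorphy of improper integrals -/
theorem hol_Ioi (hG : Nice Ω G) (hΩ : IsOpen Ω) (a : ℝ) {δ : ℝ} (hδ : 0 < δ)
    (hb : ∀ z ∈ Ω, ∃ W, IsOpen W ∧ z ∈ W ∧ ∃ M : ℝ, ∀ y, a ≤ y → ∀ w ∈ W ∩ Ω,
      ‖G y w‖ ≤ M * Real.exp (-δ * y)) :
    DifferentiableOn ℂ (fun z => ∫ y in Set.Ioi a, G y z) Ω := by
  intro z hz
  obtain ⟨W, hWo, hzW, M, hM⟩ := hb z hz
  obtain ⟨r, hr, hsub⟩ := Metric.nhds_basis_closedBall.mem_iff.1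
    ((hWo.inter hΩ).mem_nhds ⟨hzW, hz⟩)
  have hIg : IntegrableOn (fun y => Real.exp (-δ * y)) (Set.Ioi a) :=
    integrableOn_exp_mul_Ioi (by linarith) a
  have key := (hasDerivAt_integral_of_dominated_loc_of_deriv_le (μ := volume.restrict (Set.Ioi a))
    (F := fun w y => G y w) (F' := fun w y => _root_.deriv (G y) w) (x₀ := z)
    (bound := fun y => M * Real.exp (-δ * y) / (r / 2))
    (Metric.ball_mem_nhds z (half_pos hr)) ?_ ?_ ?_ ?_ ?_ ?_).2
  · exact key.differentiableAt.differentiableWithinAt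
  · filter_upwards [hΩ.mem_nhds hz] with w hw
    exact (hG.cont_x hw).aestronglyMeasurable
  · refine Integrable.mono' (hIg.const_mul M) (hG.cont_x hz).aestronglyMeasurable ?_
    rw [ae_restrict_iff' measurableSet_Ioi]
    exact Filter.Eventually.of_forall fun y hy => hM y (le_of_lt hy) z ⟨hzW, hz⟩
  · exact ((hG.deriv hΩ).cont_x hz).aestronglyMeasurable
  · rw [ae_restrict_iff' measurableSet_Ioi]
    refine Filter.Eventually.of_forall fun y hy w hw => ?_
    have hcb : Metric.closedBall w (r / 2) ⊆ W ∩ Ω := by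
      refine subset_trans (Metric.closedBall_subset_closedBall' ?_) hsub
      have := Metric.mem_ball.1 hw
      linarith
    refine Complex.norm_deriv_le_of_forall_mem_sphere_norm_le (half_pos hr) ?_ ?_
    · refine ((hG.2 y).mono ?_).diffContOnCl
      exact (Metric.closure_ball_subset_closedBall.trans hcb).trans Set.inter_subset_right
    · intro u hu
      exact hM y (le_of_lt hy) u (hcb (Metric.sphere_subset_closedBall hu))
  · exact (hIg.const_mul M).div_const _
  · refine Filter.Eventually.of_forall fun t w hw => ?_
    have : w ∈ Ω := (hsub (Metric.ball_subset_closedBall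
      (Metric.ball_subset_ball (by linarith) hw))).2
    exact ((hG.2 t).differentiableAt (hΩ.mem_nhds this)).hasDerivAt

end Nice

/-- `n` times differentiable in `x`, all derivatives being nice. -/
def NiceN (Ω : Set ℂ) : ℕ → (ℝ → ℂ → ℂ) → Prop
  | 0, g => Nice Ω g
  | n + 1, g => Nice Ω g ∧ ∃ g' : ℝ → ℂ → ℂ,
      (∀ z ∈ Ω, ∀ x, HasDerivAt (fun x => g x z) (g' x z) x) ∧ NiceN Ω n g'

theorem NiceN.nice {Ω : Set ℂ} {n : ℕ} {g : ℝ → ℂ → ℂ} (h : NiceN Ω n g) : Nice Ω g := by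
  cases n with
  | zero => exact h
  | succ n => exact h.1

theorem NiceN.deriv {Ω : Set ℂ} (hΩ : IsOpen Ω) {n : ℕ} : ∀ {g : ℝ → ℂ → ℂ}, NiceN Ω n g →
    NiceN Ω n (fun x z => deriv (g x) z) := by
  induction n with
  | zero => intro g h; exact Nice.deriv h hΩ
  | succ n ih =>
    rintro g ⟨h, g', hd, hg'⟩
    exact ⟨h.deriv hΩ, _, fun z hz x => h.deriv_swap hg'.nice hΩ hd hz x, ih hg'⟩

theorem NiceN.down {Ω : Set ℂ} {n : ℕ} : ∀ {g : ℝ → ℂ → ℂ}, NiceN Ω (n + 1) g → NiceN Ω n g := by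
  induction n with
  | zero => intro g h; exact h.1
  | succ n ih =>
    rintro g ⟨h, g', hd, hg'⟩
    exact ⟨h, g', hd, ih hg'⟩

theorem NiceN.contDiffOn {Ω : Set ℂ} (hΩ : IsOpen Ω) {n : ℕ} : ∀ {g : ℝ → ℂ → ℂ}, NiceN Ω n g →
    ContDiffOn ℝ n (fun p : ℝ × ℝ => g p.1 (p.2 : ℂ)) {p : ℝ × ℝ | (p.2 : ℂ) ∈ Ω} := by
  have hO : IsOpen {p : ℝ × ℝ | (p.2 : ℂ) ∈ Ω} := hΩ.preimage (by fun_prop)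
  have hcont : ∀ {g : ℝ → ℂ → ℂ}, Nice Ω g →
      ContinuousOn (fun p : ℝ × ℝ => g p.1 (p.2 : ℂ)) {p : ℝ × ℝ | (p.2 : ℂ) ∈ Ω} := by
    intro g h
    exact h.1.comp (f := fun p : ℝ × ℝ => (p.1, (p.2 : ℂ))) (by fun_prop) (fun p hp => ⟨trivial, hp⟩)
  induction n with
  | zero =>
    intro g h
    simpa [contDiffOn_zero] using hcont h
  | succ n ih =>
    rintro g ⟨h, g', hd, hg'⟩
    have hD : NiceN Ω n (fun x z => _root_.deriv (g x) z) :=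
      NiceN.deriv hΩ (NiceN.down ⟨h, g', hd, hg'⟩)
    have hf : ∀ p ∈ {p : ℝ × ℝ | (p.2 : ℂ) ∈ Ω},
        HasFDerivAt (fun p : ℝ × ℝ => g p.1 (p.2 : ℂ))
          ((ContinuousLinearMap.toSpanSingleton ℝ (g' p.1 p.2)).coprod
           (ContinuousLinearMap.toSpanSingleton ℝ (_root_.deriv (g p.1) p.2))) p := by
      intro p hp
      have := hasStrictFDerivAt_uncurry_coprod (𝕜 := ℝ) (u := p)
        (f := fun x (t : ℝ) => g x (t : ℂ))
        (f₁ := fun x (t : ℝ) => ContinuousLinearMap.toSpanSingleton ℝ (g' x t))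
        (f₂ := fun x (t : ℝ) => ContinuousLinearMap.toSpanSingleton ℝ (_root_.deriv (g x) t))
        ?_ ?_ ?_ ?_
      · exact this.hasFDerivAt
      · filter_upwards [hO.mem_nhds hp] with v hv
        exact (hd v.2 hv v.1).hasFDerivAt
      · filter_upwards [hO.mem_nhds hp] with v hv
        exact (HasDerivAt.comp_ofReal
          ((h.2 v.1).differentiableAt (hΩ.mem_nhds hv)).hasDerivAt).hasFDerivAt
      · have := ((hcont hg'.nice).continuousAt (hO.mem_nhds hp))
        exact ((ContinuousLinearMap.toSpanSingletonCLE (𝕜 := ℝ) (E := ℂ)).continuous.continuousAt).comp this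
      · have := ((hcont hD.nice).continuousAt (hO.mem_nhds hp))
        exact ((ContinuousLinearMap.toSpanSingletonCLE (𝕜 := ℝ) (E := ℂ)).continuous.continuousAt).comp this
    push_cast
    rw [contDiffOn_succ_iff_fderiv_of_isOpen hO]
    refine ⟨fun p hp => (hf p hp).differentiableAt.differentiableWithinAt, by simp, ?_⟩
    have c1 := (ContinuousLinearMap.toSpanSingletonCLE (𝕜 := ℝ) (E := ℂ)).contDiff.comp_contDiffOn
      (ih hg')
    have c2 := (ContinuousLinearMap.toSpanSingletonCLE (𝕜 := ℝ) (E := ℂ)).contDiff.comp_contDiffOn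
      (ih hD)
    have c3 := (ContinuousLinearMap.coprodEquivL (S := ℝ) (𝕜 := ℝ) (E := ℝ) (F := ℝ)
      (G := ℂ)).contDiff.comp_contDiffOn (c1.prodMk c2)
    exact c3.congr fun p hp => (hf p hp).fderiv

/-- Symbol classes: `n` nice derivatives in `x`, the `j`-th being bounded by
`(1 + |z|) ^ (m + j) e ^ (-δ x)` on `x ≥ x0`. -/
def Sy (Ω : Set ℂ) (x0 : ℝ) : ℕ → ℝ → ℝ → (ℝ → ℂ → ℂ) → Prop
  | 0, m, δ, g => Nice Ω g ∧ ∃ C : ℝ, 0 ≤ C ∧ ∀ x, x0 ≤ x → ∀ z ∈ Ω,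
      ‖g x z‖ ≤ C * (1 + ‖z‖) ^ m * Real.exp (-δ * x)
  | n + 1, m, δ, g => (Nice Ω g ∧ ∃ C : ℝ, 0 ≤ C ∧ ∀ x, x0 ≤ x → ∀ z ∈ Ω,
      ‖g x z‖ ≤ C * (1 + ‖z‖) ^ m * Real.exp (-δ * x)) ∧ ∃ g' : ℝ → ℂ → ℂ,
      (∀ z ∈ Ω, ∀ x, HasDerivAt (fun x => g x z) (g' x z) x) ∧ Sy Ω x0 n (m + 1) δ g'

namespace Sy
variable {Ω : Set ℂ} {x0 : ℝ}

theorem base {n : ℕ} {m δ : ℝ} {g : ℝ → ℂ → ℂ} (h : Sy Ω x0 n m δ g) : Sy Ω x0 0 m δ g := by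
  cases n with
  | zero => exact h
  | succ n => exact h.1

theorem niceN {n : ℕ} : ∀ {m δ : ℝ} {g : ℝ → ℂ → ℂ}, Sy Ω x0 n m δ g → NiceN Ω n g := by
  induction n with
  | zero => intro m δ g h; exact h.1
  | succ n ih =>
    rintro m δ g ⟨h, g', hd, hg'⟩
    exact ⟨h.1, g', hd, ih hg'⟩

theorem down {n : ℕ} : ∀ {m δ : ℝ} {g : ℝ → ℂ → ℂ}, Sy Ω x0 (n + 1) m δ g → Sy Ω x0 n m δ g := by
  induction n with
  | zero => intro m δ g h; exact h.1
  | succ n ih =>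
    rintro m δ g ⟨h, g', hd, hg'⟩
    exact ⟨h, g', hd, ih hg'⟩

theorem mono_base (hx0 : 0 ≤ x0) {m m' δ δ' : ℝ} (hm : m ≤ m') (hδ : δ' ≤ δ)
    {g : ℝ → ℂ → ℂ} (h : Sy Ω x0 0 m δ g) : Sy Ω x0 0 m' δ' g := by
  obtain ⟨h1, C, hC, hb⟩ := h
  refine ⟨h1, C, hC, fun x hx z hz => (hb x hx z hz).trans ?_⟩
  have : 0 ≤ x := hx0.trans hx
  have h1z : 1 ≤ 1 + ‖z‖ := by linarith [norm_nonneg z]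
  have a1 : (1 + ‖z‖) ^ m ≤ (1 + ‖z‖) ^ m' := Real.rpow_le_rpow_of_exponent_le h1z hm
  have a2 : Real.exp (-δ * x) ≤ Real.exp (-δ' * x) := Real.exp_le_exp.2 (by nlinarith)
  have a3 : 0 ≤ (1 + ‖z‖) ^ m := by positivity
  gcongr

theorem mono (hx0 : 0 ≤ x0) {n : ℕ} : ∀ {m m' δ δ' : ℝ} (_ : m ≤ m') (_ : δ' ≤ δ)
    {g : ℝ → ℂ → ℂ} (_ : Sy Ω x0 n m δ g), Sy Ω x0 n m' δ' g := by
  induction n with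
  | zero => intro m m' δ δ' hm hδ g h; exact mono_base hx0 hm hδ h
  | succ n ih =>
    rintro m m' δ δ' hm hδ g ⟨h, g', hd, hg'⟩
    exact ⟨mono_base hx0 hm hδ h, g', hd, ih (by linarith) hδ hg'⟩

theorem add_base {m δ : ℝ} {g h : ℝ → ℂ → ℂ} (hg : Sy Ω x0 0 m δ g) (hh : Sy Ω x0 0 m δ h) :
    Sy Ω x0 0 m δ (fun x z => g x z + h x z) := by
  obtain ⟨h1, C, hC, hb⟩ := hg
  obtain ⟨h1', C', hC', hb'⟩ := hh
  refine ⟨h1.add h1', C + C', by positivity, fun x hx z hz => (norm_add_le _ _).trans ?_⟩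
  have := hb x hx z hz
  have := hb' x hx z hz
  linarith

theorem add {n : ℕ} : ∀ {m δ : ℝ} {g h : ℝ → ℂ → ℂ} (_ : Sy Ω x0 n m δ g) (_ : Sy Ω x0 n m δ h),
    Sy Ω x0 n m δ (fun x z => g x z + h x z) := by
  induction n with
  | zero => intro m δ g h hg hh; exact add_base hg hh
  | succ n ih =>
    rintro m δ g h ⟨hg, g', hd, hg'⟩ ⟨hh, h', hd', hh'⟩
    exact ⟨add_base hg hh, _, fun z hz x => (hd z hz x).add (hd' z hz x), ih hg' hh'⟩

theorem mul_base {m δ m' δ' : ℝ} {g h : ℝ → ℂ → ℂ} (hg : Sy Ω x0 0 m δ g)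
    (hh : Sy Ω x0 0 m' δ' h) : Sy Ω x0 0 (m + m') (δ + δ') (fun x z => g x z * h x z) := by
  obtain ⟨h1, C, hC, hb⟩ := hg
  obtain ⟨h1', C', hC', hb'⟩ := hh
  refine ⟨h1.mul h1', C * C', by positivity, fun x hx z hz => ?_⟩
  have a1 := hb x hx z hz
  have a2 := hb' x hx z hz
  have h1z : 0 < 1 + ‖z‖ := by linarith [norm_nonneg z]
  rw [norm_mul, Real.rpow_add h1z, show -(δ + δ') * x = -δ * x + -δ' * x by ring, Real.exp_add]
  calc _ ≤ _ := mul_le_mul a1 a2 (norm_nonneg _) (by positivity)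
    _ = _ := by ring

theorem mul {n : ℕ} : ∀ {m δ m' δ' : ℝ} {g h : ℝ → ℂ → ℂ} (_ : Sy Ω x0 n m δ g)
    (_ : Sy Ω x0 n m' δ' h), Sy Ω x0 n (m + m') (δ + δ') (fun x z => g x z * h x z) := by
  induction n with
  | zero => intro m δ m' δ' g h hg hh; exact mul_base hg hh
  | succ n ih =>
    rintro m δ m' δ' g h ⟨hg, g', hd, hg'⟩ ⟨hh, h', hd', hh'⟩
    refine ⟨mul_base hg hh, _, fun z hz x => (hd z hz x).mul (hd' z hz x), ?_⟩
    have i1 := ih hg' (down (n := n) ⟨hh, h', hd', hh'⟩)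
    have i2 := ih (down (n := n) ⟨hg, g', hd, hg'⟩) hh'
    rw [show m + 1 + m' = m + m' + 1 by ring] at i1
    rw [show m + (m' + 1) = m + m' + 1 by ring] at i2
    exact add i1 i2

theorem zero {n : ℕ} : ∀ {m δ : ℝ}, Sy Ω x0 n m δ (fun _ _ => 0) := by
  induction n with
  | zero => intro m δ; exact ⟨Nice.const 0, 0, le_rfl, by simp⟩
  | succ n ih =>
    intro m δ
    exact ⟨⟨Nice.const 0, 0, le_rfl, by simp⟩, _, fun z _ x => hasDerivAt_const x 0, ih⟩

theorem of_hol {h : ℂ → ℂ} (hh : DifferentiableOn ℂ h Ω) {m : ℝ} {C : ℝ} (hC : 0 ≤ C)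
    (hb : ∀ z ∈ Ω, ‖h z‖ ≤ C * (1 + ‖z‖) ^ m) {n : ℕ} : Sy Ω x0 n m 0 (fun _ z => h z) := by
  have b : Sy Ω x0 0 m 0 (fun _ z => h z) :=
    ⟨Nice.of_hol hh, C, hC, fun x _ z hz => by simpa using hb z hz⟩
  cases n with
  | zero => exact b
  | succ n => exact ⟨b, _, fun z _ x => hasDerivAt_const x (h z), zero⟩

theorem of_V {V : ℝ → ℝ} (hV : ContDiff ℝ (⊤ : ℕ∞) V) {γ : ℝ} (hx0 : 0 ≤ x0)
    (hb : ∀ k : ℕ, ∃ C : ℝ, ∀ x : ℝ, |iteratedDeriv k V x| ≤ C * Real.exp (-γ * |x|)) {n : ℕ} :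
    Sy Ω x0 n 0 γ (fun x _ => (V x : ℂ)) := by
  have key : ∀ n k : ℕ, ∀ m : ℝ, 0 ≤ m → Sy Ω x0 n m γ (fun x _ => ((iteratedDeriv k V x : ℝ) : ℂ)) := by
    have hd : ∀ k x, HasDerivAt (iteratedDeriv k V) (iteratedDeriv (k + 1) V x) x := by
      intro k x
      rw [iteratedDeriv_succ]
      exact ((hV.differentiable_iteratedDeriv k (by exact_mod_cast WithTop.coe_lt_top _)) x).hasDerivAt
    have b : ∀ k : ℕ, ∀ m : ℝ, 0 ≤ m →
        Sy Ω x0 0 m γ (fun x _ => ((iteratedDeriv k V x : ℝ) : ℂ)) := by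
      intro k m hm
      obtain ⟨C, hC⟩ := hb k
      have hC0 : 0 ≤ C := by
        have := (abs_nonneg _).trans (hC 0)
        simpa using this
      refine mono_base hx0 (m := 0) (δ := γ) hm le_rfl ⟨Nice.of_cont ?_, C, hC0, fun x hx z hz => ?_⟩
      · exact Complex.continuous_ofReal.comp
          (continuous_iff_continuousAt.2 fun x => (hd k x).continuousAt)
      · have := hC x
        rw [abs_of_nonneg (hx0.trans hx)] at this
        simpa using this
    intro n
    induction n with
    | zero => exact b
    | succ n ih =>
      intro k m hm
      exact ⟨b k m hm, _, fun z _ x => (hd k x).ofReal_comp, ih (k + 1) (m + 1) (by linarith)⟩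
  simpa using key n 0 0 le_rfl

theorem congr {n : ℕ} {m δ : ℝ} {g h : ℝ → ℂ → ℂ} (hg : Sy Ω x0 n m δ g)
    (e : ∀ x, ∀ z ∈ Ω, h x z = g x z) : Sy Ω x0 n m δ h := by
  have b : Sy Ω x0 0 m δ h := by
    obtain ⟨h1, C, hC, hb⟩ := hg.base
    exact ⟨h1.congr e, C, hC, fun x hx z hz => by rw [e x z hz]; exact hb x hx z hz⟩
  cases n with
  | zero => exact b
  | succ n =>
    obtain ⟨-, g', hd, hg'⟩ := hg
    refine ⟨b, g', fun z hz x => ?_, hg'⟩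
    rw [show (fun x => h x z) = fun x => g x z from funext fun x => e x z hz]
    exact hd z hz x

theorem iter {k : ℕ} : ∀ {m δ : ℝ} {g : ℝ → ℂ → ℂ}, Sy Ω x0 k m δ g →
    ∃ gk, Sy Ω x0 0 (m + k) δ gk ∧ ∀ z ∈ Ω, (ContDiff ℝ k fun x => g x z) ∧
      ∀ x, iteratedDeriv k (fun y => g y z) x = gk x z := by
  induction k with
  | zero =>
    intro m δ g h
    exact ⟨g, by simpa using h, fun z hz => ⟨by simpa using h.1.cont_x hz, by simp⟩⟩
  | succ k ih =>
    rintro m δ g ⟨h, g', hd, hg'⟩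
    obtain ⟨gk, hgk, hh⟩ := ih hg'
    refine ⟨gk, ?_, fun z hz => ?_⟩
    · convert hgk using 1; push_cast; ring
    have e : deriv (fun y => g y z) = fun y => g' y z := funext fun y => (hd z hz y).deriv
    refine ⟨?_, fun x => ?_⟩
    · push_cast
      rw [contDiff_succ_iff_deriv]
      refine ⟨fun x => (hd z hz x).differentiableAt, by simp, ?_⟩
      rw [e]; exact (hh z hz).1
    · rw [iteratedDeriv_succ', e]; exact (hh z hz).2 x

end Sy

/-- Solution of `g' = -c g + G`, `g x0 = h`. -/
def lin (x0 : ℝ) (c h : ℂ → ℂ) (G : ℝ → ℂ → ℂ) (x : ℝ) (z : ℂ) : ℂ :=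
  Complex.exp (-(c z * ((x - x0 : ℝ) : ℂ))) *
    (h z + ∫ y in x0..x, Complex.exp (c z * ((y - x0 : ℝ) : ℂ)) * G y z)

/-- Solution of `g' = -c g + G` vanishing at infinity. -/
def linInf (x0 : ℝ) (c : ℂ → ℂ) (G : ℝ → ℂ → ℂ) : ℝ → ℂ → ℂ :=
  lin x0 c (fun z => - ∫ y in Set.Ioi x0, Complex.exp (c z * ((y - x0 : ℝ) : ℂ)) * G y z) G

section lin
variable {Ω : Set ℂ} {x0 : ℝ} {c h : ℂ → ℂ} {G : ℝ → ℂ → ℂ}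

theorem kern_nice (hc : DifferentiableOn ℂ c Ω) (hG : Nice Ω G) :
    Nice Ω (fun y z => Complex.exp (c z * ((y - x0 : ℝ) : ℂ)) * G y z) :=
  (((Nice.of_hol hc).mul (Nice.of_cont (h := fun y => ((y - x0 : ℝ) : ℂ)) (by fun_prop))).cexp).mul hG

theorem lin_nice (hΩ : IsOpen Ω) (hc : DifferentiableOn ℂ c Ω) (hh : DifferentiableOn ℂ h Ω)
    (hG : Nice Ω G) : Nice Ω (lin x0 c h G) :=
  (((Nice.of_hol hc).mul (Nice.of_cont (h := fun y => ((y - x0 : ℝ) : ℂ)) (by fun_prop))).neg.cexp).mul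
    ((Nice.of_hol hh).add ((kern_nice hc hG).integral hΩ x0))

theorem lin_x0 (z : ℂ) : lin x0 c h G x0 z = h z := by simp [lin]

theorem lin_deriv (hG : Nice Ω G) {z : ℂ} (hz : z ∈ Ω) (x : ℝ) :
    HasDerivAt (fun x => lin x0 c h G x z) (-c z * lin x0 c h G x z + G x z) x := by
  have hK : Nice ({z} : Set ℂ) (fun y z => Complex.exp (c z * ((y - x0 : ℝ) : ℂ)) * G y z) :=
    kern_nice (differentiableOn_singleton)
      ⟨hG.1.mono (Set.prod_mono le_rfl (by simpa using hz)), fun x => differentiableOn_singleton⟩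
  have h1 := hK.integral_hasDerivAt_x (z := z) rfl x0 x
  have h2 : HasDerivAt (fun x : ℝ => -(c z * ((x - x0 : ℝ) : ℂ))) (-(c z * 1)) x := by
    refine HasDerivAt.neg (HasDerivAt.const_mul _ ?_)
    simpa using ((hasDerivAt_id x).sub_const x0).ofReal_comp
  have h3 := h2.cexp.mul (h1.const_add (h z))
  refine h3.congr_deriv ?_
  have e : Complex.exp (-(c z * ((x - x0 : ℝ) : ℂ))) * Complex.exp (c z * ((x - x0 : ℝ) : ℂ)) = 1 := by
    rw [← Complex.exp_add]; simp
  simp only [lin]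
  linear_combination (G x z) * e

/-- backward bound -/
theorem lin_bwd (hG : Nice Ω G) {z : ℂ} (hz : z ∈ Ω) {H0 H K κ : ℝ} (hH0 : ‖h z‖ ≤ H0) (hH : 0 ≤ H)
    (hκ : (c z).re ≤ κ) (hκK : κ < K)
    (hb : ∀ y ≤ x0, ‖G y z‖ ≤ H * Real.exp (K * (x0 - y))) {x : ℝ} (hx : x ≤ x0) :
    ‖lin x0 c h G x z‖ ≤ (H0 + H / (K - κ)) * Real.exp (K * (x0 - x)) := by
  set r := (c z).re with hr
  have hrK : 0 < K - r := by linarith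
  let q : ℝ → ℂ := fun s => h z + ∫ y in x0..(x0 - s), Complex.exp (c z * ((y - x0 : ℝ) : ℂ)) * G y z
  have hK : Nice ({z} : Set ℂ) (fun y z => Complex.exp (c z * ((y - x0 : ℝ) : ℂ)) * G y z) :=
    kern_nice (differentiableOn_singleton)
      ⟨hG.1.mono (Set.prod_mono le_rfl (by simpa using hz)), fun x => differentiableOn_singleton⟩
  have hq : ∀ s, HasDerivAt q (-(Complex.exp (c z * ((x0 - s - x0 : ℝ) : ℂ)) * G (x0 - s) z)) s := by
    intro s
    have h1 := hK.integral_hasDerivAt_x (z := z) rfl x0 (x0 - s)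
    have h2 : HasDerivAt (fun s : ℝ => x0 - s) (-1) s := by
      simpa using (hasDerivAt_id s).const_sub x0
    have := (h1.scomp s h2).const_add (h z)
    refine this.congr_deriv ?_
    simp
  have key := image_norm_le_of_norm_deriv_right_le_deriv_boundary (f := q) (a := 0) (b := x0 - x)
    (B := fun s => H0 + H / (K - r) * (Real.exp ((K - r) * s) - 1))
    (B' := fun s => H * Real.exp ((K - r) * s))
    (fun s _ => (hq s).continuousAt.continuousWithinAt) (fun s _ => (hq s).hasDerivWithinAt)
    (by simpa [q] using hH0) ?_ ?_ (x := x0 - x) ⟨by linarith, le_rfl⟩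
  · have e : lin x0 c h G x z = Complex.exp (c z * ((x0 - x : ℝ) : ℂ)) * q (x0 - x) := by
      simp only [lin, q, sub_sub_cancel]
      congr 2
      push_cast; ring
    rw [e, norm_mul, Complex.norm_exp]
    have e2 : (c z * ((x0 - x : ℝ) : ℂ)).re = r * (x0 - x) := by
      rw [Complex.re_mul_ofReal]
    rw [e2]
    have hs : 0 ≤ x0 - x := by linarith
    have hH0' : 0 ≤ H0 := (norm_nonneg _).trans hH0
    have a0 : H / (K - r) ≤ H / (K - κ) := div_le_div_of_nonneg_left hH (by linarith) (by linarith)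
    have a0' : 0 ≤ H / (K - r) := by positivity
    have a1 : Real.exp (r * (x0 - x)) ≤ Real.exp (K * (x0 - x)) :=
      Real.exp_le_exp.2 (by nlinarith)
    have a2 : Real.exp (r * (x0 - x)) * Real.exp ((K - r) * (x0 - x)) = Real.exp (K * (x0 - x)) := by
      rw [← Real.exp_add]; ring_nf
    have a3 := Real.exp_pos (r * (x0 - x))
    calc _ ≤ Real.exp (r * (x0 - x)) * (H0 + H / (K - r) * (Real.exp ((K - r) * (x0 - x)) - 1)) := by
          gcongr
      _ = H0 * Real.exp (r * (x0 - x)) + H / (K - r) * Real.exp (K * (x0 - x))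
          - H / (K - r) * Real.exp (r * (x0 - x)) := by rw [← a2]; ring
      _ ≤ H0 * Real.exp (K * (x0 - x)) + H / (K - κ) * Real.exp (K * (x0 - x)) - 0 := by
          gcongr
          positivity
      _ = _ := by ring
  · intro s
    have h2 : HasDerivAt (fun s : ℝ => (K - r) * s) (K - r) s := by
      simpa using (hasDerivAt_id s).const_mul (K - r)
    have := ((h2.exp.sub_const 1).const_mul (H / (K - r))).const_add H0
    refine this.congr_deriv ?_
    field_simp
  · intro s hs
    rw [norm_neg, norm_mul, Complex.norm_exp, Complex.re_mul_ofReal]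
    have := hb (x0 - s) (by linarith [hs.1])
    calc _ ≤ Real.exp (r * (x0 - s - x0)) * (H * Real.exp (K * (x0 - (x0 - s)))) := by gcongr
      _ = H * (Real.exp (r * (x0 - s - x0)) * Real.exp (K * (x0 - (x0 - s)))) := by ring
      _ = _ := by rw [← Real.exp_add]; ring_nf

/-- forward bound -/
theorem lin_fwd (hG : Nice Ω G) {z : ℂ} (hz : z ∈ Ω) (hh : h z = 0) {H γ δ : ℝ} (hH : 0 ≤ H)
    (hδ : 0 < δ) (hc : γ + δ ≤ (c z).re)
    (hb : ∀ y, x0 ≤ y → ‖G y z‖ ≤ H * Real.exp (-γ * y)) {x : ℝ} (hx : x0 ≤ x) :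
    ‖lin x0 c h G x z‖ ≤ H / δ * Real.exp (-γ * x) := by
  set r := (c z).re with hr
  have hrK : 0 < r - γ := by linarith
  let q : ℝ → ℂ := fun s => h z + ∫ y in x0..s, Complex.exp (c z * ((y - x0 : ℝ) : ℂ)) * G y z
  have hK : Nice ({z} : Set ℂ) (fun y z => Complex.exp (c z * ((y - x0 : ℝ) : ℂ)) * G y z) :=
    kern_nice (differentiableOn_singleton)
      ⟨hG.1.mono (Set.prod_mono le_rfl (by simpa using hz)), fun x => differentiableOn_singleton⟩
  have hq : ∀ s, HasDerivAt q (Complex.exp (c z * ((s - x0 : ℝ) : ℂ)) * G s z) s := by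
    intro s
    exact (hK.integral_hasDerivAt_x (z := z) rfl x0 s).const_add (h z)
  have key := image_norm_le_of_norm_deriv_right_le_deriv_boundary (f := q) (a := x0) (b := x)
    (B := fun s => H / (r - γ) * Real.exp (r * (s - x0) - γ * s))
    (B' := fun s => H * Real.exp (r * (s - x0) - γ * s))
    (fun s _ => (hq s).continuousAt.continuousWithinAt) (fun s _ => (hq s).hasDerivWithinAt)
    ?_ ?_ ?_ (x := x) ⟨hx, le_rfl⟩
  · have e : lin x0 c h G x z = Complex.exp (-(c z * ((x - x0 : ℝ) : ℂ))) * q x := rfl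
    rw [e, norm_mul, Complex.norm_exp, Complex.neg_re, Complex.re_mul_ofReal]
    calc _ ≤ Real.exp (-(r * (x - x0))) * (H / (r - γ) * Real.exp (r * (x - x0) - γ * x)) := by
          gcongr
      _ = H / (r - γ) * (Real.exp (-(r * (x - x0))) * Real.exp (r * (x - x0) - γ * x)) := by ring
      _ = H / (r - γ) * Real.exp (-γ * x) := by rw [← Real.exp_add]; ring_nf
      _ ≤ _ := by gcongr; linarith
  · simp only [q, hh, intervalIntegral.integral_same, add_zero, norm_zero]
    positivity
  · intro s
    have h2 : HasDerivAt (fun s : ℝ => r * (s - x0) - γ * s) (r - γ) s := by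
      have := (((hasDerivAt_id s).sub_const x0).const_mul r).sub ((hasDerivAt_id s).const_mul γ)
      exact this.congr_deriv (by simp)
    refine (h2.exp.const_mul (H / (r - γ))).congr_deriv ?_
    field_simp
  · intro s hs
    rw [norm_mul, Complex.norm_exp, Complex.re_mul_ofReal]
    have := hb s hs.1
    calc _ ≤ Real.exp (r * (s - x0)) * (H * Real.exp (-γ * s)) := by gcongr
      _ = H * (Real.exp (r * (s - x0)) * Real.exp (-γ * s)) := by ring
      _ = _ := by rw [← Real.exp_add]; ring_nf

theorem kern_bound {z : ℂ} {H γ : ℝ} (hγ : 0 < γ) (hx0 : 0 ≤ x0) (hH : 0 ≤ H)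
    (hc : (c z).re ≤ γ / 4)
    (hb : ∀ y, x0 ≤ y → ‖G y z‖ ≤ H * Real.exp (-γ * y)) {y : ℝ} (hy : x0 ≤ y) :
    ‖Complex.exp (c z * ((y - x0 : ℝ) : ℂ)) * G y z‖ ≤ H * Real.exp (-(3 * γ / 4) * y) := by
  rw [norm_mul, Complex.norm_exp, Complex.re_mul_ofReal]
  have := hb y hy
  calc _ ≤ Real.exp ((c z).re * (y - x0)) * (H * Real.exp (-γ * y)) := by gcongr
    _ = H * (Real.exp ((c z).re * (y - x0)) * Real.exp (-γ * y)) := by ring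
    _ ≤ _ := by
      rw [← Real.exp_add]
      gcongr
      nlinarith

theorem kern_int (hG : Nice Ω G) {z : ℂ} (hz : z ∈ Ω) {H γ : ℝ} (hγ : 0 < γ) (hx0 : 0 ≤ x0)
    (hH : 0 ≤ H) (hc : (c z).re ≤ γ / 4)
    (hb : ∀ y, x0 ≤ y → ‖G y z‖ ≤ H * Real.exp (-γ * y)) :
    IntegrableOn (fun y : ℝ => Complex.exp (c z * ((y - x0 : ℝ) : ℂ)) * G y z) (Set.Ioi x0) := by
  have hIg : IntegrableOn (fun y => Real.exp (-(3 * γ / 4) * y)) (Set.Ioi x0) :=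
    integrableOn_exp_mul_Ioi (by linarith) x0
  refine Integrable.mono' (hIg.const_mul H) ?_ ?_
  · have := hG.cont_x hz
    exact (Continuous.aestronglyMeasurable (by fun_prop))
  · rw [ae_restrict_iff' measurableSet_Ioi]
    exact Filter.Eventually.of_forall fun y hy => kern_bound hγ hx0 hH hc hb (le_of_lt hy)

theorem linInf_eq (hG : Nice Ω G) {z : ℂ} (hz : z ∈ Ω) {H γ : ℝ} (hγ : 0 < γ) (hx0 : 0 ≤ x0)
    (hH : 0 ≤ H) (hc : (c z).re ≤ γ / 4)
    (hb : ∀ y, x0 ≤ y → ‖G y z‖ ≤ H * Real.exp (-γ * y)) {x : ℝ} (hx : x0 ≤ x) :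
    linInf x0 c G x z = -(Complex.exp (-(c z * ((x - x0 : ℝ) : ℂ))) *
      ∫ y in Set.Ioi x, Complex.exp (c z * ((y - x0 : ℝ) : ℂ)) * G y z) := by
  have hi := kern_int (c := c) hG hz hγ hx0 hH hc hb
  have := intervalIntegral.integral_Ioi_sub_Ioi hi hx
  simp only [linInf, lin]
  rw [← this]
  ring

theorem linInf_bound (hG : Nice Ω G) {z : ℂ} (hz : z ∈ Ω) {H γ : ℝ} (hγ : 0 < γ) (hx0 : 0 ≤ x0)
    (hH : 0 ≤ H) (hc : (c z).re ≤ γ / 4)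
    (hb : ∀ y, x0 ≤ y → ‖G y z‖ ≤ H * Real.exp (-γ * y)) {x : ℝ} (hx : x0 ≤ x) :
    ‖linInf x0 c G x z‖ ≤ 2 / γ * H * Real.exp (-γ * x) := by
  rw [linInf_eq hG hz hγ hx0 hH hc hb hx, norm_neg, ← integral_const_mul]
  have hIg : IntegrableOn (fun y => Real.exp (-(3 * γ / 4) * y)) (Set.Ioi x) :=
    integrableOn_exp_mul_Ioi (by linarith) x
  have h1 := norm_integral_le_of_norm_le (μ := volume.restrict (Set.Ioi x))
    (f := fun y => Complex.exp (-(c z * ((x - x0 : ℝ) : ℂ))) *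
      (Complex.exp (c z * ((y - x0 : ℝ) : ℂ)) * G y z))
    (hIg.const_mul (H * Real.exp (-(γ / 4) * x))) ?_
  · refine h1.trans ?_
    rw [integral_const_mul, integral_exp_mul_Ioi (by linarith)]
    have e : Real.exp (-(γ / 4) * x) * Real.exp (-(3 * γ / 4) * x) = Real.exp (-γ * x) := by
      rw [← Real.exp_add]; ring_nf
    have : H * Real.exp (-(γ / 4) * x) * (-Real.exp (-(3 * γ / 4) * x) / (-(3 * γ / 4)))
        = (4 / 3) / γ * H * Real.exp (-γ * x) := by
      rw [← e]; field_simp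
    rw [this]
    gcongr
    norm_num
  · rw [ae_restrict_iff' measurableSet_Ioi]
    refine Filter.Eventually.of_forall fun y hy => ?_
    have hxy : x < y := hy
    rw [← mul_assoc, ← Complex.exp_add, norm_mul, Complex.norm_exp]
    have e : (-(c z * ((x - x0 : ℝ) : ℂ)) + c z * ((y - x0 : ℝ) : ℂ)) = c z * ((y - x : ℝ) : ℂ) := by
      push_cast; ring
    rw [e, Complex.re_mul_ofReal]
    have := hb y (hx.trans hxy.le)
    calc _ ≤ Real.exp ((c z).re * (y - x)) * (H * Real.exp (-γ * y)) := by gcongr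
      _ = H * (Real.exp ((c z).re * (y - x)) * Real.exp (-γ * y)) := by ring
      _ ≤ H * (Real.exp (-(γ / 4) * x) * Real.exp (-(3 * γ / 4) * y)) := by
        rw [← Real.exp_add, ← Real.exp_add]
        exact mul_le_mul_of_nonneg_left (Real.exp_le_exp.2 (by nlinarith [mul_le_mul_of_nonneg_right hc (sub_nonneg.2 hxy.le)])) hH
      _ = _ := by ring

theorem linInf_h (hΩ : IsOpen Ω) (hc : DifferentiableOn ℂ c Ω) (hG : Nice Ω G) {H γ : ℝ} (hγ : 0 < γ)
    (hx0 : 0 ≤ x0) (hH : 0 ≤ H) (hcr : ∀ z ∈ Ω, (c z).re ≤ γ / 4)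
    (hb : ∀ z ∈ Ω, ∀ y, x0 ≤ y → ‖G y z‖ ≤ H * Real.exp (-γ * y)) :
    DifferentiableOn ℂ (fun z => - ∫ y in Set.Ioi x0, Complex.exp (c z * ((y - x0 : ℝ) : ℂ)) * G y z) Ω := by
  refine ((kern_nice hc hG).hol_Ioi hΩ x0 (δ := 3 * γ / 4) (by linarith) fun z hz => ?_).neg
  exact ⟨Set.univ, isOpen_univ, trivial, H, fun y hy w hw =>
    kern_bound hγ hx0 hH (hcr w hw.2) (hb w hw.2) hy⟩

theorem linInf_nice (hΩ : IsOpen Ω) (hc : DifferentiableOn ℂ c Ω) (hG : Nice Ω G) {H γ : ℝ} (hγ : 0 < γ)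
    (hx0 : 0 ≤ x0) (hH : 0 ≤ H) (hcr : ∀ z ∈ Ω, (c z).re ≤ γ / 4)
    (hb : ∀ z ∈ Ω, ∀ y, x0 ≤ y → ‖G y z‖ ≤ H * Real.exp (-γ * y)) :
    Nice Ω (linInf x0 c G) :=
  lin_nice hΩ hc (linInf_h hΩ hc hG hγ hx0 hH hcr hb) hG

theorem lin_sub {h' : ℂ → ℂ} {G' : ℝ → ℂ → ℂ} (hG : Nice Ω G) (hG' : Nice Ω G') {z : ℂ} (hz : z ∈ Ω) (x : ℝ) :
    lin x0 c (fun z => h z - h' z) (fun y z => G y z - G' y z) x z =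
      lin x0 c h G x z - lin x0 c h' G' x z := by
  have c1 := hG.cont_x hz
  have c2 := hG'.cont_x hz
  simp only [lin, mul_sub]
  rw [intervalIntegral.integral_sub (Continuous.intervalIntegrable (by fun_prop) _ _)
    (Continuous.intervalIntegrable (by fun_prop) _ _)]
  ring

theorem linInf_sub {G' : ℝ → ℂ → ℂ} (hG : Nice Ω G) (hG' : Nice Ω G') {z : ℂ} (hz : z ∈ Ω)
    {H H' γ : ℝ} (hγ : 0 < γ) (hx0 : 0 ≤ x0) (hH : 0 ≤ H) (hH' : 0 ≤ H') (hcr : (c z).re ≤ γ / 4)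
    (hb : ∀ y, x0 ≤ y → ‖G y z‖ ≤ H * Real.exp (-γ * y))
    (hb' : ∀ y, x0 ≤ y → ‖G' y z‖ ≤ H' * Real.exp (-γ * y)) (x : ℝ) :
    linInf x0 c (fun y z => G y z - G' y z) x z = linInf x0 c G x z - linInf x0 c G' x z := by
  have := lin_sub (x0 := x0) (c := c) (h := fun z => - ∫ y in Set.Ioi x0, Complex.exp (c z * ((y - x0 : ℝ) : ℂ)) * G y z)
    (h' := fun z => - ∫ y in Set.Ioi x0, Complex.exp (c z * ((y - x0 : ℝ) : ℂ)) * G' y z) hG hG' hz x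
  simp only [linInf]
  rw [← this]
  simp only [lin, mul_sub]
  rw [integral_sub (kern_int hG hz hγ hx0 hH hcr hb) (kern_int hG' hz hγ hx0 hH' hcr hb')]
  ring

end lin

theorem linInf_deriv {Ω : Set ℂ} {x0 : ℝ} {c : ℂ → ℂ} {G : ℝ → ℂ → ℂ} (hG : Nice Ω G) {z : ℂ}
    (hz : z ∈ Ω) (x : ℝ) :
    HasDerivAt (fun x => linInf x0 c G x z) (-c z * linInf x0 c G x z + G x z) x :=
  lin_deriv hG hz x

structure Dat where
  γ : ℝ
  C0 : ℝ
  x0 : ℝ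
  V1 : ℝ → ℝ
  V2 : ℝ → ℝ
  Ω : Set ℂ
  mc : ℂ → ℂ
  hγ : 0 < γ
  hγ1 : γ < 1
  hC0 : 0 ≤ C0
  hx0 : 0 ≤ x0
  hV1 : Continuous V1
  hV2 : Continuous V2
  hV : ∀ y, |V1 y| + |V2 y| ≤ C0 * Real.exp (-γ * |y|)
  hΩ : IsOpen Ω
  him : ∀ z ∈ Ω, |z.im| ≤ γ / 8
  hmc : DifferentiableOn ℂ mc Ω
  hmc2 : ∀ z ∈ Ω, mc z ^ 2 = z ^ 2 + 2
  hmcre : ∀ z ∈ Ω, 7 / 5 ≤ (mc z).re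
  hmcn : ∀ z ∈ Ω, 1 + ‖z‖ ≤ 2 * ‖mc z‖
  hsm : ∀ z ∈ Ω, (4 / γ ^ 2 + 2 / γ + 4) * C0 * Real.exp (-γ * x0) ≤ (1 + ‖z‖) / 2

namespace Dat
variable (D : Dat)

/-- abbreviation for pairs -/
abbrev PP := (ℝ → ℂ → ℂ) × (ℝ → ℂ → ℂ)

def F1 (v : PP) (y : ℝ) (z : ℂ) : ℂ := (D.V1 y : ℂ) * v.1 y z + (D.V2 y : ℂ) * v.2 y z
def F2 (v : PP) (y : ℝ) (z : ℂ) : ℂ := (D.V2 y : ℂ) * v.1 y z + (D.V1 y : ℂ) * v.2 y z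
def p (v : PP) : ℝ → ℂ → ℂ := linInf D.x0 (fun z => 2 * Complex.I * z) (D.F1 v)
def q (v : PP) : ℝ → ℂ → ℂ := linInf D.x0 (fun _ => 0) (D.p v)
def a (v : PP) : ℝ → ℂ → ℂ := lin D.x0 (fun z => D.mc z + Complex.I * z) (fun _ => 0) (D.F2 v)
def b (v : PP) : ℝ → ℂ → ℂ := linInf D.x0 (fun z => -(D.mc z - Complex.I * z)) (fun y z => - D.F2 v y z)
def T (v : PP) : PP := (D.q v, fun x z => -(D.a v x z + D.b v x z) / (2 * D.mc z))

def B : ℝ := 8 * D.C0 / D.γ + 8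
def K (z : ℂ) : ℝ := 2 * ‖z‖ + ‖D.mc z‖ + 4 * D.C0 + 4

structure Bd (v : PP) (M : ℝ) : Prop where
  M0 : 0 ≤ M
  n1 : Nice D.Ω v.1
  n2 : Nice D.Ω v.2
  f1 : ∀ z ∈ D.Ω, ∀ x, D.x0 ≤ x → ‖v.1 x z‖ ≤ M
  f2 : ∀ z ∈ D.Ω, ∀ x, D.x0 ≤ x → ‖v.2 x z‖ ≤ M
  b1 : ∀ z ∈ D.Ω, ∀ x, x ≤ D.x0 → ‖v.1 x z‖ ≤ M * D.B * Real.exp (D.K z * (D.x0 - x))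
  b2 : ∀ z ∈ D.Ω, ∀ x, x ≤ D.x0 → ‖v.2 x z‖ ≤ M * D.B * Real.exp (D.K z * (D.x0 - x))

theorem hVa (y : ℝ) : |D.V1 y| + |D.V2 y| ≤ D.C0 :=
  (D.hV y).trans (mul_le_of_le_one_right D.hC0 (Real.exp_le_one_iff.2
    (by nlinarith [D.hγ, abs_nonneg y])))

theorem comb_le {v w : ℝ} {s t : ℂ} {c m : ℝ} (h : |v| + |w| ≤ c) (hs : ‖s‖ ≤ m) (ht : ‖t‖ ≤ m) :
    ‖(v : ℂ) * s + (w : ℂ) * t‖ ≤ c * m := by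
  have hm : 0 ≤ m := (norm_nonneg _).trans hs
  calc _ ≤ ‖(v : ℂ) * s‖ + ‖(w : ℂ) * t‖ := norm_add_le _ _
    _ = |v| * ‖s‖ + |w| * ‖t‖ := by simp
    _ ≤ |v| * m + |w| * m := by gcongr
    _ = (|v| + |w|) * m := by ring
    _ ≤ _ := by gcongr

variable {D} {v w : PP} {M M' : ℝ}

theorem Bpos : 8 ≤ D.B := by
  have := div_nonneg (mul_nonneg (by norm_num : (0:ℝ) ≤ 8) D.hC0) D.hγ.le
  unfold B; linarith

theorem Bd.sub (h : D.Bd v M) (h' : D.Bd w M') : D.Bd (v - w) (M + M') where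
  M0 := add_nonneg h.M0 h'.M0
  n1 := h.n1.sub h'.n1
  n2 := h.n2.sub h'.n2
  f1 z hz x hx := (norm_sub_le _ _).trans (add_le_add (h.f1 z hz x hx) (h'.f1 z hz x hx))
  f2 z hz x hx := (norm_sub_le _ _).trans (add_le_add (h.f2 z hz x hx) (h'.f2 z hz x hx))
  b1 z hz x hx := (norm_sub_le _ _).trans
    ((add_le_add (h.b1 z hz x hx) (h'.b1 z hz x hx)).trans_eq (by ring))
  b2 z hz x hx := (norm_sub_le _ _).trans
    ((add_le_add (h.b2 z hz x hx) (h'.b2 z hz x hx)).trans_eq (by ring))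

theorem nV1 : Nice D.Ω (fun y _ => (D.V1 y : ℂ)) :=
  Nice.of_cont (h := fun y => (D.V1 y : ℂ)) (Complex.continuous_ofReal.comp D.hV1)
theorem nV2 : Nice D.Ω (fun y _ => (D.V2 y : ℂ)) :=
  Nice.of_cont (h := fun y => (D.V2 y : ℂ)) (Complex.continuous_ofReal.comp D.hV2)

theorem Bd.nF1 (h : D.Bd v M) : Nice D.Ω (D.F1 v) := (nV1.mul h.n1).add (nV2.mul h.n2)
theorem Bd.nF2 (h : D.Bd v M) : Nice D.Ω (D.F2 v) := (nV2.mul h.n1).add (nV1.mul h.n2)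

theorem Bd.F1f (h : D.Bd v M) {z : ℂ} (hz : z ∈ D.Ω) (y : ℝ) (hy : D.x0 ≤ y) :
    ‖D.F1 v y z‖ ≤ (D.C0 * M) * Real.exp (-D.γ * y) := by
  have := D.hV y
  rw [abs_of_nonneg (D.hx0.trans hy)] at this
  exact (comb_le this (h.f1 z hz y hy) (h.f2 z hz y hy)).trans_eq (by ring)

theorem Bd.F2f (h : D.Bd v M) {z : ℂ} (hz : z ∈ D.Ω) (y : ℝ) (hy : D.x0 ≤ y) :
    ‖D.F2 v y z‖ ≤ (D.C0 * M) * Real.exp (-D.γ * y) := by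
  have := D.hV y
  rw [abs_of_nonneg (D.hx0.trans hy), add_comm] at this
  exact (comb_le this (h.f1 z hz y hy) (h.f2 z hz y hy)).trans_eq (by ring)

theorem Bd.F1b (h : D.Bd v M) {z : ℂ} (hz : z ∈ D.Ω) (y : ℝ) (hy : y ≤ D.x0) :
    ‖D.F1 v y z‖ ≤ (D.C0 * (M * D.B)) * Real.exp (D.K z * (D.x0 - y)) :=
  (comb_le (D.hVa y) (h.b1 z hz y hy) (h.b2 z hz y hy)).trans_eq (by ring)

theorem Bd.F2b (h : D.Bd v M) {z : ℂ} (hz : z ∈ D.Ω) (y : ℝ) (hy : y ≤ D.x0) :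
    ‖D.F2 v y z‖ ≤ (D.C0 * (M * D.B)) * Real.exp (D.K z * (D.x0 - y)) := by
  have := D.hVa y
  rw [add_comm] at this
  exact (comb_le this (h.b1 z hz y hy) (h.b2 z hz y hy)).trans_eq (by ring)

theorem cp {z : ℂ} (hz : z ∈ D.Ω) : (2 * Complex.I * z).re ≤ D.γ / 4 := by
  have := neg_le_of_abs_le (D.him z hz)
  simp
  linarith

theorem c0 : (0 : ℂ).re ≤ D.γ / 4 := by have := D.hγ; simp; linarith

theorem cb {z : ℂ} (hz : z ∈ D.Ω) : (-(D.mc z - Complex.I * z)).re ≤ D.γ / 4 := by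
  have := neg_le_of_abs_le (D.him z hz)
  have := D.hmcre z hz
  have := D.hγ
  simp
  linarith

theorem ca {z : ℂ} (hz : z ∈ D.Ω) : D.γ + 1 / 4 ≤ (D.mc z + Complex.I * z).re := by
  have := le_of_abs_le (D.him z hz)
  have := D.hmcre z hz
  have := D.hγ1
  simp
  linarith

theorem CM (h : D.Bd v M) : 0 ≤ D.C0 * M := mul_nonneg D.hC0 h.M0

theorem dcp : DifferentiableOn ℂ (fun z => 2 * Complex.I * z) D.Ω := by fun_prop
theorem dcb : DifferentiableOn ℂ (fun z => -(D.mc z - Complex.I * z)) D.Ω :=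
  (D.hmc.sub (by fun_prop)).neg
theorem dca : DifferentiableOn ℂ (fun z => D.mc z + Complex.I * z) D.Ω :=
  (D.hmc.add (by fun_prop))

theorem Bd.np (h : D.Bd v M) : Nice D.Ω (D.p v) :=
  linInf_nice D.hΩ dcp h.nF1 D.hγ D.hx0 (CM h) (fun z hz => cp hz) (fun z hz => h.F1f hz)

theorem Bd.pf (h : D.Bd v M) {z : ℂ} (hz : z ∈ D.Ω) (x : ℝ) (hx : D.x0 ≤ x) :
    ‖D.p v x z‖ ≤ (2 / D.γ * (D.C0 * M)) * Real.exp (-D.γ * x) :=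
  linInf_bound h.nF1 hz D.hγ D.hx0 (CM h) (cp hz) (h.F1f hz) hx

theorem CMp (h : D.Bd v M) : 0 ≤ 2 / D.γ * (D.C0 * M) :=
  mul_nonneg (div_nonneg (by norm_num) D.hγ.le) (CM h)

theorem Bd.nq (h : D.Bd v M) : Nice D.Ω (D.q v) :=
  linInf_nice D.hΩ (differentiableOn_const 0) h.np D.hγ D.hx0 (CMp h) (fun z hz => c0)
    (fun z hz => h.pf hz)

theorem Bd.qf (h : D.Bd v M) {z : ℂ} (hz : z ∈ D.Ω) (x : ℝ) (hx : D.x0 ≤ x) :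
    ‖D.q v x z‖ ≤ 2 / D.γ * (2 / D.γ * (D.C0 * M)) * Real.exp (-D.γ * x) :=
  linInf_bound (c := fun _ => 0) h.np hz D.hγ D.hx0 (CMp h) c0 (h.pf hz) hx

theorem Bd.na (h : D.Bd v M) : Nice D.Ω (D.a v) :=
  lin_nice D.hΩ dca (differentiableOn_const 0) h.nF2

theorem Bd.af (h : D.Bd v M) {z : ℂ} (hz : z ∈ D.Ω) (x : ℝ) (hx : D.x0 ≤ x) :
    ‖D.a v x z‖ ≤ (D.C0 * M) / (1 / 4) * Real.exp (-D.γ * x) :=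
  lin_fwd (h := fun _ => 0) h.nF2 hz rfl (CM h) (by norm_num) (ca hz) (h.F2f hz) hx

theorem Bd.nF2' (h : D.Bd v M) : Nice D.Ω (fun y z => - D.F2 v y z) := h.nF2.neg

theorem Bd.F2f' (h : D.Bd v M) {z : ℂ} (hz : z ∈ D.Ω) (y : ℝ) (hy : D.x0 ≤ y) :
    ‖-D.F2 v y z‖ ≤ (D.C0 * M) * Real.exp (-D.γ * y) := by
  rw [norm_neg]; exact h.F2f hz y hy

theorem Bd.nb (h : D.Bd v M) : Nice D.Ω (D.b v) :=
  linInf_nice D.hΩ dcb h.nF2' D.hγ D.hx0 (CM h) (fun z hz => cb hz) (fun z hz => h.F2f' hz)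

theorem Bd.bf (h : D.Bd v M) {z : ℂ} (hz : z ∈ D.Ω) (x : ℝ) (hx : D.x0 ≤ x) :
    ‖D.b v x z‖ ≤ (2 / D.γ * (D.C0 * M)) * Real.exp (-D.γ * x) :=
  linInf_bound (c := fun z => -(D.mc z - Complex.I * z)) h.nF2' hz D.hγ D.hx0 (CM h) (cb hz) (h.F2f' hz) hx

theorem Bd.pd (h : D.Bd v M) {z : ℂ} (hz : z ∈ D.Ω) (x : ℝ) :
    HasDerivAt (fun x => D.p v x z) (-(2 * Complex.I * z) * D.p v x z + D.F1 v x z) x :=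
  linInf_deriv h.nF1 hz x

theorem Bd.qd (h : D.Bd v M) {z : ℂ} (hz : z ∈ D.Ω) (x : ℝ) :
    HasDerivAt (fun x => D.q v x z) (D.p v x z) x :=
  (linInf_deriv (x0 := D.x0) (c := fun _ => 0) h.np hz x).congr_deriv (by simp)

theorem Bd.ad (h : D.Bd v M) {z : ℂ} (hz : z ∈ D.Ω) (x : ℝ) :
    HasDerivAt (fun x => D.a v x z) (-(D.mc z + Complex.I * z) * D.a v x z + D.F2 v x z) x :=
  lin_deriv h.nF2 hz x

theorem Bd.bd (h : D.Bd v M) {z : ℂ} (hz : z ∈ D.Ω) (x : ℝ) :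
    HasDerivAt (fun x => D.b v x z) ((D.mc z - Complex.I * z) * D.b v x z - D.F2 v x z) x :=
  (linInf_deriv (x0 := D.x0) (c := fun z => -(D.mc z - Complex.I * z)) h.nF2' hz x).congr_deriv (by
    simp only [Dat.b]; ring)

theorem Bd.q_id (h : D.Bd v M) {z : ℂ} (hz : z ∈ D.Ω) (x : ℝ) (hx : D.x0 ≤ x) :
    2 * Complex.I * z * D.q v x z = linInf D.x0 (fun _ => 0) (D.F1 v) x z - D.p v x z := by
  let E : ℝ → ℂ := fun x => D.p v x z + 2 * Complex.I * z * D.q v x z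
    - linInf D.x0 (fun _ => 0) (D.F1 v) x z
  have hE : ∀ x, HasDerivAt E 0 x := fun x => by
    have := ((h.pd hz x).add ((h.qd hz x).const_mul (2 * Complex.I * z))).sub
      (linInf_deriv (x0 := D.x0) (c := fun _ => 0) h.nF1 hz x)
    exact this.congr_deriv (by ring)
  have hc : ∀ y, E y = E x := fun y => is_const_of_deriv_eq_zero
    (fun x => (hE x).differentiableAt) (fun x => (hE x).deriv) y x
  have hlim : Filter.Tendsto (fun y => Real.exp (-D.γ * y)) Filter.atTop (nhds 0) := by
    refine Real.tendsto_exp_atBot.comp ?_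
    exact Filter.tendsto_id.const_mul_atTop_of_neg (by linarith [D.hγ])
  set C := 2 / D.γ * (D.C0 * M) + ‖2 * Complex.I * z‖ * (2 / D.γ * (2 / D.γ * (D.C0 * M)))
    + 2 / D.γ * (D.C0 * M)
  have hle : ∀ y, D.x0 ≤ y → ‖E x‖ ≤ C * Real.exp (-D.γ * y) := by
    intro y hy
    rw [← hc y]
    have t1 := h.pf hz y hy
    have t2 := h.qf hz y hy
    have t3 := linInf_bound (c := fun _ => 0) h.nF1 hz D.hγ D.hx0 (CM h) c0 (h.F1f hz) hy
    calc ‖E y‖ ≤ ‖D.p v y z‖ + ‖2 * Complex.I * z‖ * ‖D.q v y z‖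
          + ‖linInf D.x0 (fun _ => 0) (D.F1 v) y z‖ := by
          refine (norm_sub_le _ _).trans ?_
          gcongr
          refine (norm_add_le _ _).trans ?_
          rw [norm_mul (2 * Complex.I * z)]
      _ ≤ _ := by
          have := mul_le_mul_of_nonneg_left t2 (norm_nonneg (2 * Complex.I * z))
          simp only [C]
          linarith
  have : ‖E x‖ ≤ 0 := by
    have l2 := hlim.const_mul C
    rw [mul_zero] at l2
    refine ge_of_tendsto l2 ?_
    filter_upwards [Filter.eventually_ge_atTop D.x0] with y hy using hle y hy
  have e : E x = 0 := norm_le_zero_iff.1 this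
  simp only [E] at e
  linear_combination e

theorem mc_ne {z : ℂ} (hz : z ∈ D.Ω) : D.mc z ≠ 0 := by
  intro h
  have := D.hmcre z hz
  rw [h] at this
  norm_num at this

theorem Bd.Tf (h : D.Bd v M) {z : ℂ} (hz : z ∈ D.Ω) (x : ℝ) (hx : D.x0 ≤ x) :
    (1 + ‖z‖) * ‖(D.T v).1 x z‖ ≤ (4 / D.γ ^ 2 + 2 / D.γ + 4) * D.C0 * M * Real.exp (-D.γ * x) ∧
    (1 + ‖z‖) * ‖(D.T v).2 x z‖ ≤ (4 / D.γ ^ 2 + 2 / D.γ + 4) * D.C0 * M * Real.exp (-D.γ * x) := by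
  have hCM := CM h
  have hg := D.hγ
  have hE := Real.exp_pos (-D.γ * x)
  constructor
  · have t1 := h.pf hz x hx
    have t2 := h.qf hz x hx
    have t3 := linInf_bound (c := fun _ => 0) h.nF1 hz D.hγ D.hx0 (CM h) c0 (h.F1f hz) hx
    have e : 2 * ‖z‖ * ‖D.q v x z‖ ≤ 2 / D.γ * (D.C0 * M) * rexp (-D.γ * x)
        + 2 / D.γ * (D.C0 * M) * rexp (-D.γ * x) := by
      have := congrArg norm (h.q_id hz x hx)
      rw [norm_mul] at this
      simp only [norm_mul, Complex.norm_I, mul_one, Complex.norm_ofNat] at this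
      rw [this]
      exact (norm_sub_le _ _).trans (add_le_add t3 t1)
    have e4 : (4 / D.γ ^ 2 + 2 / D.γ + 4) * D.C0 * M * Real.exp (-D.γ * x) =
      2 / D.γ * (2 / D.γ * (D.C0 * M)) * Real.exp (-D.γ * x) +
      (2 / D.γ * (D.C0 * M)) * Real.exp (-D.γ * x) + 4 * ((D.C0 * M) * Real.exp (-D.γ * x)) := by
      ring
    have : 0 ≤ (D.C0 * M) * Real.exp (-D.γ * x) := by positivity
    change (1 + ‖z‖) * ‖D.q v x z‖ ≤ _
    rw [e4]
    linarith
  · have t1 := h.af hz x hx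
    have t2 := h.bf hz x hx
    have hm : 0 < ‖D.mc z‖ := norm_pos_iff.2 (mc_ne hz)
    change (1 + ‖z‖) * ‖-(D.a v x z + D.b v x z) / (2 * D.mc z)‖ ≤ _
    have e4 : (4 / D.γ ^ 2 + 2 / D.γ + 4) * D.C0 * M * Real.exp (-D.γ * x) =
      (4 / D.γ ^ 2) * ((D.C0 * M) * Real.exp (-D.γ * x)) +
      (2 / D.γ * (D.C0 * M)) * Real.exp (-D.γ * x) + (D.C0 * M) / (1 / 4) * Real.exp (-D.γ * x) := by
      ring
    have : 0 ≤ (4 / D.γ ^ 2) * ((D.C0 * M) * Real.exp (-D.γ * x)) := by positivity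
    rw [e4]
    calc _ ≤ (2 * ‖D.mc z‖) * ‖-(D.a v x z + D.b v x z) / (2 * D.mc z)‖ := by
          gcongr; exact D.hmcn z hz
      _ = ‖D.a v x z + D.b v x z‖ := by
          rw [norm_div, norm_neg, norm_mul]
          simp only [Complex.norm_ofNat]
          field_simp
      _ ≤ ‖D.a v x z‖ + ‖D.b v x z‖ := norm_add_le _ _
      _ ≤ _ := by linarith

theorem Bd.half (h : D.Bd v M) {z : ℂ} (hz : z ∈ D.Ω) (x : ℝ) (hx : D.x0 ≤ x) {t : ℝ}
    (ht : (1 + ‖z‖) * t ≤ (4 / D.γ ^ 2 + 2 / D.γ + 4) * D.C0 * M * Real.exp (-D.γ * x)) :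
    t ≤ M / 2 := by
  have h1 : 0 < 1 + ‖z‖ := by linarith [norm_nonneg z]
  have hg := D.hγ
  have hc := D.hC0
  have hM := h.M0
  have h2 : Real.exp (-D.γ * x) ≤ Real.exp (-D.γ * D.x0) := Real.exp_le_exp.2 (by nlinarith)
  have h3 : (1 + ‖z‖) * t ≤ (1 + ‖z‖) * (M / 2) := by
    calc _ ≤ _ := ht
      _ ≤ (4 / D.γ ^ 2 + 2 / D.γ + 4) * D.C0 * M * Real.exp (-D.γ * D.x0) := by gcongr
      _ = (4 / D.γ ^ 2 + 2 / D.γ + 4) * D.C0 * Real.exp (-D.γ * D.x0) * M := by ring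
      _ ≤ (1 + ‖z‖) / 2 * M := by gcongr; exact D.hsm z hz
      _ = _ := by ring
  exact le_of_mul_le_mul_left h3 h1

theorem CB {N κ Kz : ℝ} (hN : 0 ≤ N) (h : 4 * D.C0 + 4 ≤ Kz - κ) : D.C0 * N / (Kz - κ) ≤ N / 4 := by
  have := D.hC0
  rw [div_le_iff₀ (by linarith)]
  nlinarith

theorem Bd.T (h : D.Bd v M) : D.Bd (D.T v) (M / 2) := by
  have hM := h.M0
  have hg := D.hγ
  have hC := D.hC0
  have hB := Bpos (D := D)
  have hMB : 0 ≤ M * D.B := mul_nonneg hM (by linarith)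
  have e0 : ∀ s t : ℝ, 0 ≤ s → s * Real.exp (-D.γ * D.x0) ≤ s := fun s t hs =>
    mul_le_of_le_one_right hs (Real.exp_le_one_iff.2 (by nlinarith [D.hx0]))
  have f1 : ∀ z ∈ D.Ω, ∀ x, D.x0 ≤ x → ‖(D.T v).1 x z‖ ≤ M / 2 := fun z hz x hx =>
    h.half hz x hx (h.Tf hz x hx).1
  have hpB : 2 / D.γ * (D.C0 * M) + M * D.B / 4 ≤ M * D.B / 2 := by
    have : M * D.B / 4 = 2 / D.γ * (D.C0 * M) + 2 * M := by
      unfold B; field_simp; ring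
    linarith
  have pb : ∀ z ∈ D.Ω, ∀ x, x ≤ D.x0 →
      ‖D.p v x z‖ ≤ (M * D.B / 2) * Real.exp (D.K z * (D.x0 - x)) := by
    intro z hz x hx
    have h0 : ‖- ∫ y in Set.Ioi D.x0, Complex.exp (2 * Complex.I * z * ((y - D.x0 : ℝ) : ℂ)) * D.F1 v y z‖
        ≤ 2 / D.γ * (D.C0 * M) := by
      have := h.pf hz D.x0 le_rfl
      simp only [p, linInf, lin_x0] at this
      exact this.trans (e0 _ 0 (CMp h))
    have hk : (2 * Complex.I * z).re ≤ 2 * ‖z‖ := by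
      refine (Complex.re_le_norm _).trans ?_
      simp
    have := lin_bwd (c := fun z => 2 * Complex.I * z)
      (h := fun z => - ∫ y in Set.Ioi D.x0, Complex.exp (2 * Complex.I * z * ((y - D.x0 : ℝ) : ℂ)) * D.F1 v y z)
      h.nF1 hz h0 (mul_nonneg hC hMB) (K := D.K z) hk
      (by unfold K; linarith [norm_nonneg (D.mc z)]) (h.F1b hz) hx
    refine this.trans ?_
    gcongr
    have := CB (D := D) hMB (κ := 2 * ‖z‖) (Kz := D.K z) (by unfold K; linarith [norm_nonneg (D.mc z)])
    linarith
  refine ⟨by linarith, h.nq, ?_, f1, ?_, ?_, ?_⟩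
  · refine (((h.na.add h.nb).neg).mul (Nice.of_hol (h := fun z => (2 * D.mc z)⁻¹) ?_))
    exact (D.hmc.const_mul 2).inv (fun z hz => mul_ne_zero two_ne_zero (mc_ne hz))
  · exact fun z hz x hx => h.half hz x hx (h.Tf hz x hx).2
  · intro z hz x hx
    have h0 : ‖- ∫ y in Set.Ioi D.x0, Complex.exp (0 * ((y - D.x0 : ℝ) : ℂ)) * D.p v y z‖ ≤ M / 2 := by
      have := f1 z hz D.x0 le_rfl
      simpa only [Dat.T, q, linInf, lin_x0] using this
    have hK4 : 4 ≤ D.K z := by unfold K; linarith [norm_nonneg (D.mc z), norm_nonneg z]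
    have := lin_bwd (c := fun z => 0)
      (h := fun z => - ∫ y in Set.Ioi D.x0, Complex.exp (0 * ((y - D.x0 : ℝ) : ℂ)) * D.p v y z)
      h.np hz h0 (by linarith) (K := D.K z) (κ := 0) (by simp) (by linarith) (pb z hz) hx
    refine this.trans ?_
    gcongr
    have : M * D.B / 2 / (D.K z - 0) ≤ M * D.B / 2 / 4 := by
      gcongr; linarith
    nlinarith
  · intro z hz x hx
    have hre := D.hmcre z hz
    have hmn : 1 ≤ ‖D.mc z‖ := by linarith [Complex.re_le_norm (D.mc z)]
    have h0 : ‖- ∫ y in Set.Ioi D.x0, Complex.exp (-(D.mc z - Complex.I * z) * ((y - D.x0 : ℝ) : ℂ)) * -D.F2 v y z‖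
        ≤ 2 / D.γ * (D.C0 * M) := by
      have := h.bf hz D.x0 le_rfl
      simp only [Dat.b, linInf, lin_x0] at this
      exact this.trans (e0 _ 0 (CMp h))
    have hkb : (-(D.mc z - Complex.I * z)).re ≤ ‖D.mc z‖ + ‖z‖ := by
      refine (Complex.re_le_norm _).trans ?_
      rw [norm_neg]
      refine (norm_sub_le _ _).trans ?_
      simp
    have hka : (D.mc z + Complex.I * z).re ≤ ‖D.mc z‖ + ‖z‖ := by
      refine (Complex.re_le_norm _).trans ?_
      refine (norm_add_le _ _).trans ?_
      simp
    have hKk : 4 * D.C0 + 4 ≤ D.K z - (‖D.mc z‖ + ‖z‖) := by unfold K; linarith [norm_nonneg z]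
    have hb := lin_bwd (c := fun z => -(D.mc z - Complex.I * z))
      (h := fun z => - ∫ y in Set.Ioi D.x0, Complex.exp (-(D.mc z - Complex.I * z) * ((y - D.x0 : ℝ) : ℂ)) * -D.F2 v y z)
      h.nF2' hz h0 (mul_nonneg hC hMB) (K := D.K z) hkb
      (by linarith) (fun y hy => by rw [norm_neg]; exact h.F2b hz y hy) hx
    have ha := lin_bwd (c := fun z => D.mc z + Complex.I * z)
      (h := fun z => 0) (H0 := 0)
      h.nF2 hz (by simp) (mul_nonneg hC hMB) (K := D.K z) hka
      (by linarith) (h.F2b hz) hx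
    have hCB := CB (D := D) hMB hKk
    set Ex := Real.exp (D.K z * (D.x0 - x))
    have hEx : 0 < Ex := Real.exp_pos _
    have hb' : ‖D.b v x z‖ ≤ M * D.B / 2 * Ex := by
      refine (le_trans (le_of_eq rfl) hb).trans ?_
      gcongr
      linarith
    have ha' : ‖D.a v x z‖ ≤ M * D.B / 4 * Ex := by
      refine (le_trans (le_of_eq rfl) ha).trans ?_
      gcongr
      linarith
    change ‖-(D.a v x z + D.b v x z) / (2 * D.mc z)‖ ≤ _
    rw [norm_div, norm_neg, norm_mul, Complex.norm_ofNat, div_le_iff₀ (by linarith)]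
    have h1 := norm_add_le (D.a v x z) (D.b v x z)
    have h2 : 0 ≤ M * D.B * Ex := by positivity
    nlinarith

end Dat

theorem linInf_congr {x0 : ℝ} {c : ℂ → ℂ} {G G' : ℝ → ℂ → ℂ} {z : ℂ}
    (h : ∀ y, G y z = G' y z) (x : ℝ) : linInf x0 c G x z = linInf x0 c G' x z := by
  simp only [linInf, lin, h]

namespace Dat
variable {D : Dat} {v w : PP} {M M' : ℝ}

theorem F1_sub : D.F1 (v - w) = fun y z => D.F1 v y z - D.F1 w y z := by
  funext y z
  simp only [F1, Prod.fst_sub, Prod.snd_sub, Pi.sub_apply]; ring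

theorem F2_sub : D.F2 (v - w) = fun y z => D.F2 v y z - D.F2 w y z := by
  funext y z
  simp only [F2, Prod.fst_sub, Prod.snd_sub, Pi.sub_apply]; ring

theorem p_sub (h : D.Bd v M) (h' : D.Bd w M') {z : ℂ} (hz : z ∈ D.Ω) (x : ℝ) :
    D.p (v - w) x z = D.p v x z - D.p w x z := by
  simp only [p, F1_sub]
  exact linInf_sub h.nF1 h'.nF1 hz D.hγ D.hx0 (CM h) (CM h') (cp hz) (h.F1f hz) (h'.F1f hz) x

theorem q_sub (h : D.Bd v M) (h' : D.Bd w M') {z : ℂ} (hz : z ∈ D.Ω) (x : ℝ) :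
    D.q (v - w) x z = D.q v x z - D.q w x z := by
  have := linInf_congr (x0 := D.x0) (c := fun _ => 0) (G := D.p (v - w)) (z := z) (G' := fun y z => D.p v y z - D.p w y z) (p_sub h h' hz) x
  simp only [q]
  rw [this]
  exact linInf_sub (G := D.p v) (G' := D.p w) (c := fun _ => 0) h.np h'.np hz D.hγ D.hx0 (CMp h) (CMp h') c0 (h.pf hz) (h'.pf hz) x

theorem a_sub (h : D.Bd v M) (h' : D.Bd w M') {z : ℂ} (hz : z ∈ D.Ω) (x : ℝ) :
    D.a (v - w) x z = D.a v x z - D.a w x z := by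
  have := lin_sub (x0 := D.x0) (c := fun z => D.mc z + Complex.I * z) (h := fun _ => 0)
    (h' := fun _ => 0) h.nF2 h'.nF2 hz x
  simp only [sub_zero] at this
  simp only [a, F2_sub, this]

theorem b_sub (h : D.Bd v M) (h' : D.Bd w M') {z : ℂ} (hz : z ∈ D.Ω) (x : ℝ) :
    D.b (v - w) x z = D.b v x z - D.b w x z := by
  have e : (fun y z => - D.F2 (v - w) y z) = fun y z => (- D.F2 v y z) - (- D.F2 w y z) := by
    funext y z; rw [F2_sub]; ring
  simp only [b]
  rw [e]
  exact linInf_sub (G := fun y z => - D.F2 v y z) (G' := fun y z => - D.F2 w y z)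
    (c := fun z => -(D.mc z - Complex.I * z)) h.nF2' h'.nF2' hz D.hγ D.hx0 (CM h) (CM h') (cb hz)
    (h.F2f' hz) (h'.F2f' hz) x

theorem T_sub1 (h : D.Bd v M) (h' : D.Bd w M') {z : ℂ} (hz : z ∈ D.Ω) (x : ℝ) :
    (D.T (v - w)).1 x z = (D.T v).1 x z - (D.T w).1 x z := q_sub h h' hz x

theorem T_sub2 (h : D.Bd v M) (h' : D.Bd w M') {z : ℂ} (hz : z ∈ D.Ω) (x : ℝ) :
    (D.T (v - w)).2 x z = (D.T v).2 x z - (D.T w).2 x z := by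
  simp only [Dat.T]
  rw [a_sub h h' hz, b_sub h h' hz]; ring

theorem tsum_le {d : ℕ → ℂ} {C : ℝ} (h : ∀ n, ‖d n‖ ≤ C * (1 / 2) ^ n) :
    ‖∑' n, d n‖ ≤ 2 * C ∧ Summable d := by
  have hs : HasSum (fun n : ℕ => C * (1 / 2 : ℝ) ^ n) (C * 2) := hasSum_geometric_two.mul_left C
  exact ⟨(tsum_of_norm_bounded hs h).trans_eq (by ring), Summable.of_norm_bounded hs.summable h⟩

theorem bd_tsum {d : ℕ → PP} {c : ℝ} (hd : ∀ n, D.Bd (d n) (c * (1 / 2) ^ n)) :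
    D.Bd (fun x z => ∑' n, (d n).1 x z, fun x z => ∑' n, (d n).2 x z) (2 * c) := by
  have hc : 0 ≤ c := by simpa using (hd 0).M0
  have hB := Bpos (D := D)
  have loc : ∀ x, ∀ z ∈ D.Ω, ∃ U ∈ nhds x, ∃ W, IsOpen W ∧ z ∈ W ∧ ∃ C : ℝ, ∀ n, ∀ y ∈ U, ∀ w ∈ W,
      ‖(d n).1 y w‖ ≤ C * (1 / 2) ^ n ∧ ‖(d n).2 y w‖ ≤ C * (1 / 2) ^ n := by
    intro x z hz
    have hKc : ContinuousOn D.K D.Ω := by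
      have := D.hmc.continuousOn
      unfold K; fun_prop
    have hn : {w | D.K w < D.K z + 1} ∈ nhds z :=
      (hKc.continuousAt (D.hΩ.mem_nhds hz)).eventually (gt_mem_nhds (by linarith))
    obtain ⟨W, hW, hWo, hzW⟩ := mem_nhds_iff.1 (Filter.inter_mem hn (D.hΩ.mem_nhds hz))
    refine ⟨Set.Ioi (x - 1), Ioi_mem_nhds (by linarith), W, hWo, hzW,
      c * D.B * Real.exp ((D.K z + 1) * |D.x0 - (x - 1)|), fun n y hy w hw => ?_⟩
    have hwΩ := (hW hw).2
    have hwK : D.K w < D.K z + 1 := (hW hw).1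
    have hyx : x - 1 < y := hy
    have hKp : 0 ≤ D.K w := by
      have := D.hC0
      unfold K; positivity
    have hpow : (0:ℝ) ≤ (1 / 2) ^ n := by positivity
    rcases le_total D.x0 y with h | h
    · have e1 : 1 ≤ Real.exp ((D.K z + 1) * |D.x0 - (x - 1)|) :=
        Real.one_le_exp (mul_nonneg (by linarith) (abs_nonneg _))
      have : c * (1 / 2) ^ n ≤ c * D.B * Real.exp ((D.K z + 1) * |D.x0 - (x - 1)|) * (1 / 2) ^ n := by
        gcongr
        calc c = c * 1 * 1 := by ring
          _ ≤ _ := by gcongr; linarith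
      exact ⟨((hd n).f1 w hwΩ y h).trans this, ((hd n).f2 w hwΩ y h).trans this⟩
    · have : c * (1 / 2) ^ n * D.B * Real.exp (D.K w * (D.x0 - y)) ≤
          c * D.B * Real.exp ((D.K z + 1) * |D.x0 - (x - 1)|) * (1 / 2) ^ n := by
        have : Real.exp (D.K w * (D.x0 - y)) ≤ Real.exp ((D.K z + 1) * |D.x0 - (x - 1)|) := by
          refine Real.exp_le_exp.2 (mul_le_mul hwK.le ?_ (by linarith) (by linarith))
          exact le_trans (by linarith) (le_abs_self _)
        calc _ = c * D.B * Real.exp (D.K w * (D.x0 - y)) * (1 / 2) ^ n := by ring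
          _ ≤ _ := by gcongr
      exact ⟨((hd n).b1 w hwΩ y h).trans this, ((hd n).b2 w hwΩ y h).trans this⟩
  refine ⟨by linarith, ?_, ?_, ?_, ?_, ?_, ?_⟩
  · refine Nice.tsum (fun n => (hd n).n1) D.hΩ fun x z hz => ?_
    obtain ⟨U, hU, W, h1, h2, C, hC⟩ := loc x z hz
    exact ⟨U, hU, W, h1, h2, C, fun n y hy w hw => (hC n y hy w hw).1⟩
  · refine Nice.tsum (fun n => (hd n).n2) D.hΩ fun x z hz => ?_
    obtain ⟨U, hU, W, h1, h2, C, hC⟩ := loc x z hz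
    exact ⟨U, hU, W, h1, h2, C, fun n y hy w hw => (hC n y hy w hw).2⟩
  · exact fun z hz x hx => (tsum_le fun n => (hd n).f1 z hz x hx).1
  · exact fun z hz x hx => (tsum_le fun n => (hd n).f2 z hz x hx).1
  · intro z hz x hx
    refine (tsum_le (C := c * D.B * Real.exp (D.K z * (D.x0 - x)))
      fun n => ((hd n).b1 z hz x hx).trans_eq (by ring)).1.trans_eq (by ring)
  · intro z hz x hx
    refine (tsum_le (C := c * D.B * Real.exp (D.K z * (D.x0 - x)))
      fun n => ((hd n).b2 z hz x hx).trans_eq (by ring)).1.trans_eq (by ring)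

def e0 : PP := (fun _ _ => 1, fun _ _ => 0)

variable (D) in
def d : ℕ → PP
  | 0 => e0
  | n + 1 => D.T (d n)

theorem bd_e0 : D.Bd e0 1 := by
  have hB := Bpos (D := D)
  have hKp : ∀ z, 0 ≤ D.K z := fun z => by
    have := D.hC0
    unfold K; positivity
  refine ⟨by norm_num, Nice.const 1, Nice.const 0, by simp [e0], by simp [e0], fun z hz x hx => ?_,
    fun z hz x hx => ?_⟩
  · have : 1 ≤ Real.exp (D.K z * (D.x0 - x)) :=
      Real.one_le_exp (mul_nonneg (hKp z) (by linarith))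
    simp [e0]
    nlinarith
  · simp [e0]; positivity

theorem bd_d (n : ℕ) : D.Bd (D.d n) ((1 / 2) ^ n) := by
  induction n with
  | zero => simpa [d] using bd_e0
  | succ n ih =>
    have := ih.T
    rw [pow_succ]
    simpa [d, div_eq_mul_inv] using this

variable (D) in
def vv : PP := (fun x z => ∑' n, (D.d n).1 x z, fun x z => ∑' n, (D.d n).2 x z)

variable (D) in
def SS (N : ℕ) : PP := ∑ n ∈ Finset.range N, D.d n

theorem bd_vv : D.Bd D.vv 2 := by
  have := bd_tsum (D := D) (d := D.d) (c := 1) (fun n => by simpa using bd_d n)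
  simpa [vv] using this

theorem bd_SS (N : ℕ) : ∃ M, D.Bd (D.SS N) M := by
  induction N with
  | zero =>
    have := (bd_e0 (D := D)).sub (bd_e0 (D := D))
    rw [sub_self] at this
    exact ⟨_, by simpa [SS] using this⟩
  | succ N ih =>
    obtain ⟨M, h⟩ := ih
    have h0 := (bd_e0 (D := D)).sub (bd_e0 (D := D))
    rw [sub_self] at h0
    have := h.sub (h0.sub (bd_d N))
    rw [zero_sub, sub_neg_eq_add] at this
    exact ⟨_, by rw [SS, Finset.sum_range_succ]; exact this⟩

theorem summ1 {z : ℂ} (hz : z ∈ D.Ω) (x : ℝ) :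
    Summable (fun n => (D.d n).1 x z) ∧ Summable (fun n => (D.d n).2 x z) := by
  rcases le_total D.x0 x with h | h
  · exact ⟨(tsum_le (C := 1) fun n => by simpa using (bd_d n).f1 z hz x h).2,
      (tsum_le (C := 1) fun n => by simpa using (bd_d n).f2 z hz x h).2⟩
  · exact ⟨(tsum_le (C := D.B * Real.exp (D.K z * (D.x0 - x))) fun n =>
        ((bd_d n).b1 z hz x h).trans_eq (by ring)).2,
      (tsum_le (C := D.B * Real.exp (D.K z * (D.x0 - x))) fun n =>
        ((bd_d n).b2 z hz x h).trans_eq (by ring)).2⟩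

theorem SS1 (N : ℕ) (x : ℝ) (z : ℂ) : (D.SS N).1 x z = ∑ n ∈ Finset.range N, (D.d n).1 x z := by
  simp [SS, Prod.fst_sum]
theorem SS2 (N : ℕ) (x : ℝ) (z : ℂ) : (D.SS N).2 x z = ∑ n ∈ Finset.range N, (D.d n).2 x z := by
  simp [SS, Prod.snd_sum]

/-- bounds for tails -/
theorem bd_tail (N : ℕ) : ∃ v : PP, D.Bd v (2 * (1 / 2) ^ N) ∧
    ∀ x, ∀ z ∈ D.Ω, (D.vv - D.SS N).1 x z = v.1 x z ∧ (D.vv - D.SS N).2 x z = v.2 x z := by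
  refine ⟨_, bd_tsum (D := D) (d := fun n => D.d (n + N)) (c := (1 / 2) ^ N)
    (fun n => by rw [← pow_add, add_comm]; exact bd_d _), fun x z hz => ?_⟩
  have := summ1 hz x
  constructor
  · rw [Prod.fst_sub, Pi.sub_apply, Pi.sub_apply, SS1]
    have := this.1.sum_add_tsum_nat_add N
    simp only [vv]
    rw [← this]; ring
  · rw [Prod.snd_sub, Pi.sub_apply, Pi.sub_apply, SS2]
    have := this.2.sum_add_tsum_nat_add N
    simp only [vv]
    rw [← this]; ring

theorem Bd.congr (h : D.Bd v M) (e : ∀ x, ∀ z ∈ D.Ω, w.1 x z = v.1 x z ∧ w.2 x z = v.2 x z) :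
    D.Bd w M := by
  refine ⟨h.M0, h.n1.congr fun x z hz => (e x z hz).1, h.n2.congr fun x z hz => (e x z hz).2,
    fun z hz x hx => ?_, fun z hz x hx => ?_, fun z hz x hx => ?_, fun z hz x hx => ?_⟩
  · rw [(e x z hz).1]; exact h.f1 z hz x hx
  · rw [(e x z hz).2]; exact h.f2 z hz x hx
  · rw [(e x z hz).1]; exact h.b1 z hz x hx
  · rw [(e x z hz).2]; exact h.b2 z hz x hx

theorem T_SS (N : ℕ) {z : ℂ} (hz : z ∈ D.Ω) (x : ℝ) :
    (D.T (D.SS N)).1 x z = (D.SS (N + 1)).1 x z - e0.1 x z ∧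
    (D.T (D.SS N)).2 x z = (D.SS (N + 1)).2 x z - e0.2 x z := by
  induction N with
  | zero =>
    have e : D.SS 0 = D.SS 0 - D.SS 0 := by simp [SS]
    obtain ⟨M, h⟩ := bd_SS (D := D) 0
    rw [e, T_sub1 h h hz, T_sub2 h h hz]
    simp [SS, d]
  | succ N ih =>
    have e : D.SS N = D.SS (N + 1) - D.d N := by simp [SS, Finset.sum_range_succ]
    obtain ⟨M, h⟩ := bd_SS (D := D) (N + 1)
    have i := ih
    rw [e, T_sub1 h (bd_d N) hz, T_sub2 h (bd_d N) hz] at i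
    have s1 : (D.SS (N + 1 + 1)) = D.SS (N + 1) + D.T (D.d N) := by
      rw [SS, Finset.sum_range_succ]; rfl
    rw [s1]
    simp only [Prod.fst_add, Prod.snd_add, Pi.add_apply]
    constructor
    · linear_combination i.1
    · linear_combination i.2

theorem fix {z : ℂ} (hz : z ∈ D.Ω) (x : ℝ) :
    D.vv.1 x z = 1 + (D.T D.vv).1 x z ∧ D.vv.2 x z = (D.T D.vv).2 x z := by
  have key : ∀ N, ‖(D.T D.vv).1 x z - ((D.SS (N + 1)).1 x z - 1)‖ ≤
        (1 + D.B * Real.exp (D.K z * (D.x0 - x))) * (1 / 2) ^ N ∧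
      ‖(D.T D.vv).2 x z - ((D.SS (N + 1)).2 x z - 0)‖ ≤
        (1 + D.B * Real.exp (D.K z * (D.x0 - x))) * (1 / 2) ^ N := by
    intro N
    obtain ⟨v, hv, e⟩ := bd_tail (D := D) N
    have ht := (hv.congr e).T
    obtain ⟨M, h⟩ := bd_SS (D := D) N
    have hTS := T_SS (D := D) N hz x
    have hB := Bpos (D := D)
    have hp : (0:ℝ) ≤ (1 / 2) ^ N := by positivity
    have hx : (0:ℝ) ≤ D.B * Real.exp (D.K z * (D.x0 - x)) := by positivity
    have e1 := T_sub1 bd_vv h hz x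
    have e2 := T_sub2 bd_vv h hz x
    rw [hTS.1] at e1
    rw [hTS.2] at e2
    change (D.T (D.vv - D.SS N)).1 x z = (D.T D.vv).1 x z - ((D.SS (N + 1)).1 x z - 1) at e1
    change (D.T (D.vv - D.SS N)).2 x z = (D.T D.vv).2 x z - ((D.SS (N + 1)).2 x z - 0) at e2
    rw [← e1, ← e2]
    rcases le_total D.x0 x with hx0 | hx0
    · have a1 := ht.f1 z hz x hx0
      have a2 := ht.f2 z hz x hx0
      constructor <;> nlinarith
    · have a1 := ht.b1 z hz x hx0
      have a2 := ht.b2 z hz x hx0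
      constructor <;> nlinarith
  have hlim : Filter.Tendsto (fun N : ℕ => (1 + D.B * Real.exp (D.K z * (D.x0 - x))) * (1 / 2 : ℝ) ^ N)
      Filter.atTop (nhds 0) := by
    have := (tendsto_pow_atTop_nhds_zero_of_lt_one (r := (1/2 : ℝ)) (by norm_num) (by norm_num)).const_mul
      (1 + D.B * Real.exp (D.K z * (D.x0 - x)))
    simpa only [mul_zero] using this
  have hs := summ1 hz x
  have l1 : Filter.Tendsto (fun N => (D.SS (N + 1)).1 x z) Filter.atTop (nhds (D.vv.1 x z)) := by
    simp only [SS1]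
    exact (hs.1.hasSum.tendsto_sum_nat).comp (Filter.tendsto_add_atTop_nat 1)
  have l2 : Filter.Tendsto (fun N => (D.SS (N + 1)).2 x z) Filter.atTop (nhds (D.vv.2 x z)) := by
    simp only [SS2]
    exact (hs.2.hasSum.tendsto_sum_nat).comp (Filter.tendsto_add_atTop_nat 1)
  constructor
  · have z1 := squeeze_zero_norm (fun N => (key N).1) hlim
    have z2 := (tendsto_const_nhds (x := (D.T D.vv).1 x z)).sub (l1.sub_const 1)
    have := tendsto_nhds_unique z1 z2
    linear_combination this
  · have z1 := squeeze_zero_norm (fun N => (key N).2) hlim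
    have z2 := (tendsto_const_nhds (x := (D.T D.vv).2 x z)).sub (l2.sub_const 0)
    have := tendsto_nhds_unique z1 z2
    linear_combination this

end Dat

structure Sol (Ω : Set ℂ) (x0 γ : ℝ) (V1 V2 : ℝ → ℝ) (w1 w2 w1' w2' : ℝ → ℂ → ℂ) : Prop where
  s1 : ∀ n, Sy Ω x0 n (-1) γ w1
  s2 : ∀ n, Sy Ω x0 n (-1) γ w2
  d1 : ∀ z ∈ Ω, ∀ x, HasDerivAt (fun x => w1 x z) (w1' x z) x
  d2 : ∀ z ∈ Ω, ∀ x, HasDerivAt (fun x => w2 x z) (w2' x z) x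
  dd1 : ∀ z ∈ Ω, ∀ x, HasDerivAt (fun x => w1' x z)
    (-(2 * Complex.I * z) * w1' x z + ((V1 x : ℂ) * (1 + w1 x z) + (V2 x : ℂ) * w2 x z)) x
  dd2 : ∀ z ∈ Ω, ∀ x, HasDerivAt (fun x => w2' x z)
    (-(2 * Complex.I * z) * w2' x z + (2 * z ^ 2 + 2) * w2 x z
      + ((V2 x : ℂ) * (1 + w1 x z) + (V1 x : ℂ) * w2 x z)) x

namespace Dat

theorem result (D : Dat) (hs1 : ∀ n, Sy D.Ω D.x0 n 0 D.γ (fun x _ => (D.V1 x : ℂ)))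
    (hs2 : ∀ n, Sy D.Ω D.x0 n 0 D.γ (fun x _ => (D.V2 x : ℂ))) :
    ∃ w1 w2 w1' w2', Sol D.Ω D.x0 D.γ D.V1 D.V2 w1 w2 w1' w2' := by
  have hv := bd_vv (D := D)
  have hg := D.hγ
  have hC := D.hC0
  let w1 := (D.T D.vv).1
  let w2 := (D.T D.vv).2
  let w1' := D.p D.vv
  let w2' : ℝ → ℂ → ℂ := fun x z => (D.a D.vv x z - D.b D.vv x z) / 2 - Complex.I * z * w2 x z
  have hF1 : ∀ z ∈ D.Ω, ∀ x, D.F1 D.vv x z = (D.V1 x : ℂ) * (1 + w1 x z) + (D.V2 x : ℂ) * w2 x z := by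
    intro z hz x
    simp only [F1, (fix hz x).1, (fix hz x).2, w1, w2]
  have hF2 : ∀ z ∈ D.Ω, ∀ x, D.F2 D.vv x z = (D.V2 x : ℂ) * (1 + w1 x z) + (D.V1 x : ℂ) * w2 x z := by
    intro z hz x
    simp only [F2, (fix hz x).1, (fix hz x).2, w1, w2]
  have d1 : ∀ z ∈ D.Ω, ∀ x, HasDerivAt (fun x => w1 x z) (w1' x z) x := fun z hz x => hv.qd hz x
  have d2 : ∀ z ∈ D.Ω, ∀ x, HasDerivAt (fun x => w2 x z) (w2' x z) x := by
    intro z hz x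
    have := (((hv.ad hz x).add (hv.bd hz x)).neg).div_const (2 * D.mc z)
    refine this.congr_deriv ?_
    have := mc_ne hz
    simp only [w2', w2, Dat.T]
    field_simp
    ring
  have dd1 : ∀ z ∈ D.Ω, ∀ x, HasDerivAt (fun x => w1' x z)
    (-(2 * Complex.I * z) * w1' x z + ((D.V1 x : ℂ) * (1 + w1 x z) + (D.V2 x : ℂ) * w2 x z)) x := by
    intro z hz x
    rw [← hF1 z hz x]
    exact hv.pd hz x
  have dd2 : ∀ z ∈ D.Ω, ∀ x, HasDerivAt (fun x => w2' x z)
    (-(2 * Complex.I * z) * w2' x z + (2 * z ^ 2 + 2) * w2 x z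
      + ((D.V2 x : ℂ) * (1 + w1 x z) + (D.V1 x : ℂ) * w2 x z)) x := by
    intro z hz x
    rw [← hF2 z hz x]
    have := (((hv.ad hz x).sub (hv.bd hz x)).div_const 2).sub ((d2 z hz x).const_mul (Complex.I * z))
    refine this.congr_deriv ?_
    have hm := mc_ne hz
    have hm2 := D.hmc2 z hz
    have e : D.mc z * w2 x z * 2 = -(D.a D.vv x z + D.b D.vv x z) := by
      simp only [w2, Dat.T]; field_simp
    simp only [w2']
    linear_combination (-D.mc z/2) * e + w2 x z * hm2 + (- z ^ 2 * w2 x z) * Complex.I_sq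
  have hT := fun z hz x hx => hv.Tf (z := z) hz x hx
  set C := (4 / D.γ ^ 2 + 2 / D.γ + 4) * D.C0 * 2
  have hC' : 0 ≤ C := by positivity
  have key : ∀ {t E : ℝ} {z : ℂ}, (1 + ‖z‖) * t ≤ C * E → t ≤ C * (1 + ‖z‖) ^ (-1 : ℝ) * E := by
    intro t E z h
    have h1 : 0 < 1 + ‖z‖ := by linarith [norm_nonneg z]
    rw [Real.rpow_neg_one, mul_assoc, mul_left_comm, ← div_eq_inv_mul, le_div_iff₀ h1]
    linarith
  have b1 : Sy D.Ω D.x0 0 (-1) D.γ w1 :=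
    ⟨hv.T.n1, C, hC', fun x hx z hz => key (hT z hz x hx).1⟩
  have b2 : Sy D.Ω D.x0 0 (-1) D.γ w2 :=
    ⟨hv.T.n2, C, hC', fun x hx z hz => key (hT z hz x hx).2⟩
  have b1' : Sy D.Ω D.x0 0 0 D.γ w1' :=
    ⟨hv.np, _, CMp hv, fun x hx z hz => by simpa using hv.pf hz x hx⟩
  have b2' : Sy D.Ω D.x0 0 0 D.γ w2' := by
    refine ⟨(((hv.na.sub hv.nb).mul (Nice.const (1 / 2))).sub
      ((Nice.of_hol (h := fun z => Complex.I * z) (by fun_prop)).mul hv.T.n2)).congr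
      (fun x z hz => by simp only [w2', w2]; ring), ((D.C0 * 2) / (1 / 4) + 2 / D.γ * (D.C0 * 2)) / 2 + C,
      by positivity, fun x hx z hz => ?_⟩
    have t1 := hv.af hz x hx
    have t2 := hv.bf hz x hx
    have t3 := (hT z hz x hx).2
    rw [Real.rpow_zero, mul_one]
    have n1 : ‖w2' x z‖ ≤ (‖D.a D.vv x z‖ + ‖D.b D.vv x z‖) / 2 + ‖z‖ * ‖w2 x z‖ := by
      refine (norm_sub_le _ _).trans ?_
      rw [norm_div, norm_mul, norm_mul, Complex.norm_I, one_mul, Complex.norm_ofNat]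
      gcongr
      exact norm_sub_le _ _
    have n2 : 0 ≤ ‖w2 x z‖ := norm_nonneg _
    have t3' : (1 + ‖z‖) * ‖w2 x z‖ ≤ C * Real.exp (-D.γ * x) := t3
    linarith
  have hz1 : ∀ n, Sy D.Ω D.x0 n 1 0 (fun _ z => -(2 * Complex.I * z)) := fun n =>
    Sy.of_hol (by fun_prop) (C := 2) (by norm_num) (fun z hz => by
      rw [norm_neg]; simp)
  have hz2 : ∀ n, Sy D.Ω D.x0 n 2 0 (fun _ z => 2 * z ^ 2 + 2) := fun n =>
    Sy.of_hol (by fun_prop) (C := 2) (by norm_num) (fun z hz => by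
      refine (norm_add_le _ _).trans ?_
      rw [norm_mul, norm_pow, Real.rpow_two]
      simp; nlinarith [norm_nonneg z])
  have all : ∀ n, Sy D.Ω D.x0 n (-1) D.γ w1 ∧ Sy D.Ω D.x0 n (-1) D.γ w2 ∧
      Sy D.Ω D.x0 n 0 D.γ w1' ∧ Sy D.Ω D.x0 n 0 D.γ w2' := by
    intro n
    induction n with
    | zero => exact ⟨b1, b2, b1', b2'⟩
    | succ n ih =>
      obtain ⟨i1, i2, i1', i2'⟩ := ih
      have hx := D.hx0
      have vw : ∀ {V w : ℝ → ℂ → ℂ}, Sy D.Ω D.x0 n 0 D.γ V → Sy D.Ω D.x0 n (-1) D.γ w →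
          Sy D.Ω D.x0 n 1 D.γ (fun x z => V x z * w x z) := fun h1 h2 =>
        (h1.mul h2).mono hx (by norm_num) (by linarith)
      have v1 : ∀ {V w : ℝ → ℂ → ℂ}, Sy D.Ω D.x0 n 0 D.γ V → Sy D.Ω D.x0 n (-1) D.γ w →
          Sy D.Ω D.x0 n 1 D.γ (fun x z => V x z * (1 + w x z)) := fun h1 h2 =>
        ((h1.mono hx (by norm_num) le_rfl).add (vw h1 h2)).congr (fun x z hz => by ring)
      have zw : ∀ {w : ℝ → ℂ → ℂ}, Sy D.Ω D.x0 n 0 D.γ w →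
          Sy D.Ω D.x0 n 1 D.γ (fun x z => -(2 * Complex.I * z) * w x z) := fun h =>
        ((hz1 n).mul h).mono hx (by norm_num) (by linarith)
      have zzw : ∀ {w : ℝ → ℂ → ℂ}, Sy D.Ω D.x0 n (-1) D.γ w →
          Sy D.Ω D.x0 n 1 D.γ (fun x z => (2 * z ^ 2 + 2) * w x z) := fun h =>
        ((hz2 n).mul h).mono hx (by norm_num) (by linarith)
      refine ⟨⟨b1, w1', d1, by simpa using i1'⟩, ⟨b2, w2', d2, by simpa using i2'⟩,
        ⟨b1', _, dd1, ?_⟩, ⟨b2', _, dd2, ?_⟩⟩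
      · rw [zero_add]
        exact (zw i1').add ((v1 (hs1 n) i1).add (vw (hs2 n) i2))
      · rw [zero_add]
        exact ((zw i2').add (zzw i2)).add ((v1 (hs2 n) i1).add (vw (hs1 n) i2))
  exact ⟨w1, w2, w1', w2', fun n => (all n).1, fun n => (all n).2.1, d1, d2, dd1, dd2⟩

end Dat

def mcf (z : ℂ) : ℂ := Complex.exp (Complex.log (z ^ 2 + 2) / 2)

theorem mcf_props {z : ℂ} (hz : |z.im| ≤ 1 / 8) :
    z ^ 2 + 2 ∈ Complex.slitPlane ∧ mcf z ^ 2 = z ^ 2 + 2 ∧ 7 / 5 ≤ (mcf z).re ∧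
      1 + ‖z‖ ≤ 2 * ‖mcf z‖ := by
  have him : z.im ^ 2 ≤ 1 / 64 := by
    have := sq_abs z.im
    nlinarith [abs_nonneg z.im]
  have hre : (z ^ 2 + 2).re = z.re ^ 2 - z.im ^ 2 + 2 := by
    simp [pow_two]
  have hre' : 0 < (z ^ 2 + 2).re := by rw [hre]; nlinarith [sq_nonneg z.re]
  have hsl : z ^ 2 + 2 ∈ Complex.slitPlane := Or.inl hre'
  have hne : z ^ 2 + 2 ≠ 0 := Complex.slitPlane_ne_zero hsl
  have hsq : mcf z ^ 2 = z ^ 2 + 2 := by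
    rw [mcf, ← Complex.exp_nat_mul]
    rw [show ((2 : ℕ) : ℂ) * (Complex.log (z ^ 2 + 2) / 2) = Complex.log (z ^ 2 + 2) by push_cast; ring]
    exact Complex.exp_log hne
  have hpos : 0 ≤ (mcf z).re := by
    rw [mcf, Complex.exp_re]
    refine mul_nonneg (Real.exp_pos _).le (Real.cos_nonneg_of_neg_pi_div_two_le_of_le ?_ ?_)
    · have := Complex.neg_pi_lt_arg (z ^ 2 + 2)
      simp [Complex.log_im]; linarith
    · have := Complex.arg_le_pi (z ^ 2 + 2)
      simp [Complex.log_im]; linarith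
  have e1 := congrArg Complex.re hsq
  have e1' : (mcf z).re ^ 2 - (mcf z).im ^ 2 = z.re ^ 2 - z.im ^ 2 + 2 := by
    rw [← hre, ← e1]; simp [pow_two]
  refine ⟨hsl, hsq, ?_, ?_⟩
  · refine (pow_le_pow_iff_left₀ (by norm_num) hpos two_ne_zero).1 ?_
    nlinarith [sq_nonneg z.re, sq_nonneg (mcf z).im]
  · have e2 : ‖mcf z‖ ^ 2 = (mcf z).re ^ 2 + (mcf z).im ^ 2 := by
      rw [Complex.sq_norm, Complex.normSq_apply]; ring
    have e3 : ‖z‖ ^ 2 = z.re ^ 2 + z.im ^ 2 := by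
      rw [Complex.sq_norm, Complex.normSq_apply]; ring
    refine (pow_le_pow_iff_left₀ (by positivity) (by positivity) two_ne_zero).1 ?_
    nlinarith [sq_nonneg (‖z‖ - 1), sq_nonneg z.re, sq_nonneg (mcf z).im]

theorem exists_sol {γ : ℝ} {V₁ V₂ : ℝ → ℝ} (hV : PotentialHyp γ V₁ V₂) :
    ∃ Cc : ℝ, 0 ≤ Cc ∧ ∀ x0 : ℝ, 0 ≤ x0 → ∀ Ω : Set ℂ, IsOpen Ω → (∀ z ∈ Ω, |z.im| ≤ γ / 8) →
      (∀ z ∈ Ω, Cc * Real.exp (-γ * x0) ≤ (1 + ‖z‖) / 2) →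
      ∃ w1 w2 w1' w2', Sol Ω x0 γ V₁ V₂ w1 w2 w1' w2' := by
  obtain ⟨hγ, hγ1, hs1, hs2, -, -, hb⟩ := hV
  obtain ⟨C, hC⟩ := hb 0
  have hC0 : 0 ≤ max C 0 := le_max_right _ _
  refine ⟨(4 / γ ^ 2 + 2 / γ + 4) * max C 0, by positivity, fun x0 hx0 Ω hΩ him hsm => ?_⟩
  have hm : ∀ z ∈ Ω, |z.im| ≤ 1 / 8 := fun z hz => (him z hz).trans (by linarith)
  let D : Dat := 
    { γ := γ, C0 := max C 0, x0 := x0, V1 := V₁, V2 := V₂, Ω := Ω, mc := mcf, hγ := hγ, hγ1 := hγ1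
      hC0 := hC0, hx0 := hx0, hV1 := hs1.continuous, hV2 := hs2.continuous
      hV := fun y => by
        have := hC y
        simp only [iteratedDeriv_zero] at this
        exact this.trans (mul_le_mul_of_nonneg_right (le_max_left _ _) (Real.exp_pos _).le)
      hΩ := hΩ
      him := him
      hmc := fun z hz => by
        have : DifferentiableAt ℂ (fun z : ℂ => z ^ 2 + 2) z := by fun_prop
        exact ((this.clog (mcf_props (hm z hz)).1).div_const 2).cexp.differentiableWithinAt
      hmc2 := fun z hz => (mcf_props (hm z hz)).2.1
      hmcre := fun z hz => (mcf_props (hm z hz)).2.2.1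
      hmcn := fun z hz => (mcf_props (hm z hz)).2.2.2
      hsm := hsm }
  exact D.result
    (fun n => Sy.of_V hs1 hx0 (fun k => by
      obtain ⟨C, hC⟩ := hb k
      exact ⟨C, fun x => le_trans (by linarith [abs_nonneg (iteratedDeriv k V₂ x)]) (hC x)⟩))
    (fun n => Sy.of_V hs2 hx0 (fun k => by
      obtain ⟨C, hC⟩ := hb k
      exact ⟨C, fun x => le_trans (by linarith [abs_nonneg (iteratedDeriv k V₁ x)]) (hC x)⟩))

theorem exists_sols {γ : ℝ} {V₁ V₂ : ℝ → ℝ} (hV : PotentialHyp γ V₁ V₂) :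
    ∃ x0 L : ℝ, 0 ≤ x0 ∧ 0 ≤ L ∧
      (∃ w1 w2 w1' w2', Sol {z : ℂ | |z.im| < γ / 8} x0 γ V₁ V₂ w1 w2 w1' w2') ∧
      (∃ w1 w2 w1' w2', Sol {z : ℂ | |z.im| < γ / 8 ∧ L < |z.re|} 0 γ V₁ V₂ w1 w2 w1' w2') := by
  have hγ := hV.1
  obtain ⟨Cc, hCc, h⟩ := exists_sol hV
  have o1 : IsOpen {z : ℂ | |z.im| < γ / 8} :=
    isOpen_lt (by fun_prop) continuous_const
  refine ⟨2 * Cc / γ, 2 * Cc, by positivity, by positivity, h _ (by positivity) _ o1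
    (fun z hz => le_of_lt hz) ?_, h 0 le_rfl _
    (o1.inter (isOpen_lt continuous_const (by fun_prop) : IsOpen {z : ℂ | 2 * Cc < |z.re|}))
    (fun z hz => le_of_lt hz.1) ?_⟩
  · intro z hz
    have e : -γ * (2 * Cc / γ) = -(2 * Cc) := by field_simp
    have : Cc * Real.exp (-(2 * Cc)) ≤ 1 / 2 := by
      rw [Real.exp_neg, ← div_eq_mul_inv, div_le_iff₀ (Real.exp_pos _)]
      linarith [Real.add_one_le_exp (2 * Cc)]
    rw [e]
    linarith [norm_nonneg z]
  · intro z hz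
    have h1 := Complex.abs_re_le_norm z
    have h2 : 2 * Cc < |z.re| := hz.2
    simp
    linarith

theorem rpow_comp {a b : ℝ} (ha : 0 < a) (hb : 0 < b) (h1 : a ≤ 2 * b) (h2 : b ≤ 2 * a) (s : ℝ) :
    a ^ s ≤ 2 ^ |s| * b ^ s := by
  rcases le_total 0 s with h | h
  · rw [abs_of_nonneg h, ← Real.mul_rpow (by norm_num) hb.le]
    exact Real.rpow_le_rpow ha.le h1 h
  · have : a ^ s ≤ (b / 2) ^ s := Real.rpow_le_rpow_of_nonpos (by positivity) (by linarith) h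
    refine this.trans_eq ?_
    rw [abs_of_nonpos h, Real.div_rpow hb.le (by norm_num), Real.rpow_neg (by norm_num)]
    field_simp

theorem mu_comp (lam s : ℝ) : (1 + |lam|) ^ s ≤ 2 ^ |s| * mu lam ^ s := by
  have h0 : 0 < mu lam := Real.sqrt_pos.2 (by positivity)
  have h1 : mu lam ^ 2 = lam ^ 2 + 2 := Real.sq_sqrt (by positivity)
  have h2 := sq_abs lam
  have h3 := abs_nonneg lam
  refine rpow_comp (by positivity) h0 ?_ ?_ s
  · refine (pow_le_pow_iff_left₀ (by positivity) (by positivity) two_ne_zero).1 ?_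
    nlinarith [sq_nonneg (|lam| - 1)]
  · refine (pow_le_pow_iff_left₀ (by positivity) (by positivity) two_ne_zero).1 ?_
    nlinarith

theorem iter_real {f : ℂ → ℂ} {Ω : Set ℂ} (hΩ : IsOpen Ω) (hf : DifferentiableOn ℂ f Ω) (l : ℕ) :
    ∀ lam : ℝ, (lam : ℂ) ∈ Ω →
      iteratedDeriv l (fun m : ℝ => f (m : ℂ)) lam = iteratedDeriv l f (lam : ℂ) := by
  have hd : ∀ l, DifferentiableOn ℂ (iteratedDeriv l f) Ω := by
    intro l
    induction l with
    | zero => simpa using hf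
    | succ l ih => rw [iteratedDeriv_succ]; exact ih.deriv hΩ
  induction l with
  | zero => simp
  | succ l ih =>
    intro lam hl
    rw [iteratedDeriv_succ, iteratedDeriv_succ]
    have ev : iteratedDeriv l (fun m : ℝ => f (m : ℂ)) =ᶠ[nhds lam] fun m : ℝ => iteratedDeriv l f (m : ℂ) := by
      have : {m : ℝ | (m : ℂ) ∈ Ω} ∈ nhds lam :=
        (hΩ.preimage Complex.continuous_ofReal).mem_nhds hl
      filter_upwards [this] with m hm using ih m hm
    rw [ev.deriv_eq]
    exact (((hd l).differentiableAt (hΩ.mem_nhds hl)).hasDerivAt.comp_ofReal).deriv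

theorem smooth_real {f : ℂ → ℂ} {Ω : Set ℂ} (hΩ : IsOpen Ω) (hf : DifferentiableOn ℂ f Ω) {lam : ℝ}
    (hl : (lam : ℂ) ∈ Ω) (n : ℕ) : ContDiffAt ℝ n (fun m : ℝ => f (m : ℂ)) lam := by
  have h1 : ContDiffAt ℂ n f (lam : ℂ) := (hf.contDiffOn hΩ).contDiffAt (hΩ.mem_nhds hl)
  have h2 : ContDiffAt ℝ n f (lam : ℂ) := h1.restrict_scalars ℝ
  exact ContDiffAt.comp (g := f) lam h2 Complex.ofRealCLM.contDiff.contDiffAt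

theorem der_bound {Ω : Set ℂ} (hΩ : IsOpen Ω) {x0 s γ r : ℝ} {g : ℝ → ℂ → ℂ} (hg : Sy Ω x0 0 s γ g)
    (hr : 0 < r) (hr1 : r ≤ 1 / 2) (l : ℕ) :
    ∃ C, 0 ≤ C ∧ ∀ lam : ℝ, Metric.closedBall (lam : ℂ) r ⊆ Ω → ∀ x, x0 ≤ x →
      ‖iteratedDeriv l (fun m : ℝ => g x (m : ℂ)) lam‖ ≤ C * (1 + |lam|) ^ s * Real.exp (-γ * x) := by
  obtain ⟨hn, C, hC, hb⟩ := hg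
  refine ⟨l.factorial * (C * 2 ^ |s|) / r ^ l, by positivity, fun lam hsub x hx => ?_⟩
  rw [iter_real hΩ (hn.2 x) l lam (hsub (Metric.mem_closedBall_self hr.le))]
  have hdc : DiffContOnCl ℂ (g x) (Metric.ball (lam : ℂ) r) := by
    refine ((hn.2 x).mono ?_).diffContOnCl
    exact (Metric.closure_ball_subset_closedBall).trans hsub
  have := Complex.norm_iteratedDeriv_le_of_forall_mem_sphere_norm_le l hr hdc
    (C := C * (2 ^ |s| * (1 + |lam|) ^ s) * Real.exp (-γ * x)) ?_
  · refine this.trans_eq ?_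
    ring
  · intro z hz
    refine (hb x hx z (hsub (Metric.sphere_subset_closedBall hz))).trans ?_
    have hz' : ‖z - lam‖ = r := mem_sphere_iff_norm.1 hz
    have n1 : ‖z‖ ≤ |lam| + r := by
      have := norm_add_le (z - lam) (lam : ℂ)
      simp [hz'] at this
      linarith
    have n2 : |lam| ≤ ‖z‖ + r := by
      have := norm_sub_le z (z - lam)
      simp [hz'] at this
      linarith
    have : (1 + ‖z‖) ^ s ≤ 2 ^ |s| * (1 + |lam|) ^ s :=
      rpow_comp (by positivity) (by positivity) (by linarith [abs_nonneg lam])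
        (by linarith [norm_nonneg z]) s
    gcongr

theorem iter_pair {f g : ℝ → ℂ} {k : ℕ} {x : ℝ} (hf : ContDiffAt ℝ k f x) (hg : ContDiffAt ℝ k g x) :
    iteratedDeriv k (fun y => (f y, g y)) x = (iteratedDeriv k f x, iteratedDeriv k g x) := by
  simp only [iteratedDeriv_eq_iteratedFDeriv]
  rw [iteratedFDeriv_prodMk hf hg le_rfl]
  rfl

/-- the ODE after removing the phase -/
theorem sol_of {V₁ V₂ : ℝ → ℝ} {lam : ℝ} {U1 U2 U1' U2' : ℝ → ℂ}
    (hs : ContDiff ℝ 2 (fun x : ℝ => Complex.exp (Complex.I * (lam : ℂ) * (x : ℂ)) • (U1 x, U2 x)))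
    (h1 : ∀ x, HasDerivAt U1 (U1' x) x) (h2 : ∀ x, HasDerivAt U2 (U2' x) x)
    (h1' : ∀ x, HasDerivAt U1' (-(2 * Complex.I * lam) * U1' x + ((V₁ x : ℂ) * U1 x + (V₂ x : ℂ) * U2 x)) x)
    (h2' : ∀ x, HasDerivAt U2' (-(2 * Complex.I * lam) * U2' x + (2 * (lam : ℂ) ^ 2 + 2) * U2 x
      + ((V₂ x : ℂ) * U1 x + (V₁ x : ℂ) * U2 x)) x) :
    IsSolution V₁ V₂ (((1 + lam ^ 2 : ℝ) : ℂ))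
      (fun x : ℝ => Complex.exp (Complex.I * (lam : ℂ) * (x : ℂ)) • (U1 x, U2 x)) := by
  have he : ∀ x : ℝ, HasDerivAt (fun x : ℝ => Complex.exp (Complex.I * (lam : ℂ) * (x : ℂ)))
      (Complex.exp (Complex.I * (lam : ℂ) * (x : ℂ)) * (Complex.I * lam)) x := by
    intro x
    have : HasDerivAt (fun x : ℝ => Complex.I * (lam : ℂ) * (x : ℂ)) (Complex.I * lam * 1) x :=
      (Complex.ofRealCLM.hasDerivAt (x := x)).const_mul _
    simpa using this.cexp
  have d2 : ∀ {U U' U'' : ℝ → ℂ}, (∀ x, HasDerivAt U (U' x) x) → (∀ x, HasDerivAt U' (U'' x) x) →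
      ∀ x, iteratedDeriv 2 (fun x : ℝ => Complex.exp (Complex.I * (lam : ℂ) * (x : ℂ)) * U x) x =
        Complex.exp (Complex.I * (lam : ℂ) * (x : ℂ)) * (U'' x + 2 * Complex.I * lam * U' x - lam ^ 2 * U x) := by
    intro U U' U'' hU hU' x
    rw [iteratedDeriv_succ, iteratedDeriv_one]
    have e : deriv (fun x : ℝ => Complex.exp (Complex.I * (lam : ℂ) * (x : ℂ)) * U x) =
        fun x : ℝ => Complex.exp (Complex.I * (lam : ℂ) * (x : ℂ)) * (Complex.I * lam) * U x +
          Complex.exp (Complex.I * (lam : ℂ) * (x : ℂ)) * U' x := by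
      funext x
      exact ((he x).mul (hU x)).deriv
    rw [e]
    refine ((((he x).mul_const (Complex.I * (lam : ℂ))).mul (hU x)).add ((he x).mul (hU' x))).deriv.trans ?_
    linear_combination (Complex.exp (Complex.I * (lam : ℂ) * (x : ℂ)) * lam ^ 2 * U x) * Complex.I_sq
  refine ⟨hs, fun x => ?_⟩
  simp only [matH, Prod.smul_mk, smul_eq_mul]
  rw [d2 h1 h1' x, d2 h2 h2' x]
  push_cast
  refine Prod.ext ?_ ?_
  · simp only; ring
  · simp only; ring

theorem sol_conj {V₁ V₂ : ℝ → ℝ} {c : ℝ} {f : ℝ → ℂ × ℂ} (h : IsSolution V₁ V₂ (c : ℂ) f) :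
    IsSolution V₁ V₂ (c : ℂ) (conj2 f) := by
  obtain ⟨hs, he⟩ := h
  have hstar : ∀ g : ℝ → ℂ, ∀ x, iteratedDeriv 2 (fun y => starRingEnd ℂ (g y)) x
      = starRingEnd ℂ (iteratedDeriv 2 g x) := by
    intro g x
    have e : ∀ g : ℝ → ℂ, deriv (fun y => starRingEnd ℂ (g y)) = fun y => starRingEnd ℂ (deriv g y) := by
      intro g; funext y; exact deriv.star (f := g) (x := y)
    rw [iteratedDeriv_succ, iteratedDeriv_one, e, e, iteratedDeriv_succ, iteratedDeriv_one]
  constructor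
  · have h1 : ContDiff ℝ 2 (fun x => starRingEnd ℂ (f x).1) := Complex.conjCLE.contDiff.comp hs.fst
    have h2 : ContDiff ℝ 2 (fun x => starRingEnd ℂ (f x).2) := Complex.conjCLE.contDiff.comp hs.snd
    exact h1.prodMk h2
  · intro x
    have := he x
    simp only [matH] at this
    have t1 := congrArg (fun p => starRingEnd ℂ p.1) this
    have t2 := congrArg (fun p => starRingEnd ℂ p.2) this
    simp only [matH, conj2, hstar]
    refine Prod.ext ?_ ?_
    · simpa using t1
    · simpa using t2

/-- smooth cutoff -/
def etaC (L : ℝ) (m : ℝ) : ℝ :=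
  Real.smoothTransition ((m ^ 2 - (L + 1) ^ 2) / ((L + 2) ^ 2 - (L + 1) ^ 2))

theorem etaC_smooth (L : ℝ) (n : ℕ) : ContDiff ℝ n (fun m : ℝ => (etaC L m : ℂ)) := by
  have h1 : ContDiff ℝ n (etaC L) := by
    unfold etaC
    exact Real.smoothTransition.contDiff.comp (by fun_prop)
  exact Complex.ofRealCLM.contDiff.comp h1

theorem etaC_zero {L m : ℝ} (hL : 0 ≤ L) (h : |m| ≤ L + 1) : etaC L m = 0 := by
  apply Real.smoothTransition.zero_of_nonpos
  apply div_nonpos_of_nonpos_of_nonneg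
  · have := sq_abs m
    nlinarith [abs_nonneg m]
  · nlinarith

theorem etaC_one {L m : ℝ} (hL : 0 ≤ L) (h : L + 2 ≤ |m|) : etaC L m = 1 := by
  apply Real.smoothTransition.one_of_one_le
  rw [le_div_iff₀ (by nlinarith)]
  have := sq_abs m
  nlinarith [abs_nonneg m]

theorem leib {e h : ℝ → ℂ} {l : ℕ} {lam E : ℝ} {M D : ℕ → ℝ} (hE : 0 ≤ E)
    (he : ContDiffAt ℝ l e lam) (hh : ContDiffAt ℝ l h lam)
    (hM : ∀ i, ‖iteratedDeriv i e lam‖ ≤ M i) (hD : ∀ i, ‖iteratedDeriv i h lam‖ ≤ D i * E) :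
    ‖iteratedDeriv l (fun m => e m * h m) lam‖ ≤
      (∑ i ∈ Finset.range (l + 1), (l.choose i : ℝ) * M i * D (l - i)) * E := by
  have := iteratedDeriv_mul he hh
  have e1 : (fun m => e m * h m) = e * h := rfl
  rw [e1, this, Finset.sum_mul]
  refine (norm_sum_le _ _).trans (Finset.sum_le_sum fun i _ => ?_)
  rw [norm_mul, norm_mul, Complex.norm_natCast]
  have a := hM i
  have b := hD (l - i)
  have c : 0 ≤ M i := (norm_nonneg _).trans a
  calc _ ≤ (l.choose i : ℝ) * M i * (D (l - i) * E) := by gcongr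
    _ = _ := by ring

/-- strip -/
def Oa (γ : ℝ) : Set ℂ := {z : ℂ | |z.im| < γ / 8}
/-- strip minus a compact piece -/
def Ob (γ L : ℝ) : Set ℂ := {z : ℂ | |z.im| < γ / 8 ∧ L < |z.re|}

theorem Oa_open (γ : ℝ) : IsOpen (Oa γ) := isOpen_lt (by fun_prop) (by fun_prop)
theorem Ob_open (γ L : ℝ) : IsOpen (Ob γ L) :=
  (isOpen_lt (f := fun z : ℂ => |z.im|) (by fun_prop) (by fun_prop)).inter
    (isOpen_lt (g := fun z : ℂ => |z.re|) (by fun_prop) (by fun_prop))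

theorem Oa_mem {γ : ℝ} (hγ : 0 < γ) (m : ℝ) : (m : ℂ) ∈ Oa γ := by
  simp [Oa, hγ]
theorem Ob_mem {γ L : ℝ} (hγ : 0 < γ) {m : ℝ} (h : L < |m|) : (m : ℂ) ∈ Ob γ L := by
  simp [Ob, hγ, h]

theorem Oa_ball {γ : ℝ} (hγ : 0 < γ) (m : ℝ) : Metric.closedBall (m : ℂ) (γ / 16) ⊆ Oa γ := by
  intro z hz
  rw [mem_closedBall_iff_norm] at hz
  have h1 := Complex.abs_im_le_norm (z - m)
  simp only [Complex.sub_im, Complex.ofReal_im, sub_zero] at h1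
  show |z.im| < γ / 8
  linarith

theorem Ob_ball {γ L : ℝ} (hγ : 0 < γ) (hγ1 : γ < 1) {m : ℝ} (h : L + 1 ≤ |m|) :
    Metric.closedBall (m : ℂ) (γ / 16) ⊆ Ob γ L := by
  intro z hz
  refine ⟨Oa_ball hγ m hz, ?_⟩
  rw [mem_closedBall_iff_norm] at hz
  have h1 := Complex.abs_re_le_norm (z - m)
  simp only [Complex.sub_re, Complex.ofReal_re] at h1
  have h2 := abs_sub_abs_le_abs_sub m z.re
  rw [abs_sub_comm] at h2
  linarith

/-- blended function -/
def bl (L : ℝ) (ga gb : ℝ → ℂ → ℂ) (x m : ℝ) : ℂ :=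
  (1 - (etaC L m : ℂ)) * ga x m + (etaC L m : ℂ) * gb x m

theorem bl_lo {L m : ℝ} (hL : 0 ≤ L) (h : |m| ≤ L + 1) (ga gb : ℝ → ℂ → ℂ) (x : ℝ) :
    bl L ga gb x m = ga x m := by
  simp [bl, etaC_zero hL h]

theorem bl_hi {L m : ℝ} (hL : 0 ≤ L) (h : L + 2 ≤ |m|) (ga gb : ℝ → ℂ → ℂ) (x : ℝ) :
    bl L ga gb x m = gb x m := by
  simp [bl, etaC_one hL h]

theorem bl_joint {γ L : ℝ} (hγ : 0 < γ) (hL : 0 ≤ L) {ga gb : ℝ → ℂ → ℂ} {n : ℕ}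
    (ha : NiceN (Oa γ) n ga) (hb : NiceN (Ob γ L) n gb) :
    ContDiff ℝ n (fun p : ℝ × ℝ => bl L ga gb p.1 p.2) := by
  rw [contDiff_iff_contDiffAt]
  intro p
  have oa : IsOpen {p : ℝ × ℝ | (p.2 : ℂ) ∈ Oa γ} := (Oa_open γ).preimage (by fun_prop)
  have ob : IsOpen {p : ℝ × ℝ | (p.2 : ℂ) ∈ Ob γ L} := (Ob_open γ L).preimage (by fun_prop)
  have ca : ContDiffAt ℝ n (fun p : ℝ × ℝ => ga p.1 (p.2 : ℂ)) p :=
    (ha.contDiffOn (Oa_open γ)).contDiffAt (oa.mem_nhds (Oa_mem hγ p.2))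
  by_cases h : |p.2| < L + 1
  · refine ca.congr_of_eventuallyEq ?_
    have : {q : ℝ × ℝ | |q.2| < L + 1} ∈ nhds p :=
      (isOpen_lt (by fun_prop) (by fun_prop)).mem_nhds h
    filter_upwards [this] with q hq
    exact bl_lo hL (le_of_lt hq) ga gb q.1
  · have cb : ContDiffAt ℝ n (fun p : ℝ × ℝ => gb p.1 (p.2 : ℂ)) p :=
      (hb.contDiffOn (Ob_open γ L)).contDiffAt (ob.mem_nhds (Ob_mem hγ (by linarith)))
    have ce : ContDiffAt ℝ n (fun p : ℝ × ℝ => (etaC L p.2 : ℂ)) p :=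
      ((etaC_smooth L n).comp contDiff_snd).contDiffAt
    exact ((contDiffAt_const.sub ce).mul ca).add (ce.mul cb)

theorem bl_smooth {γ L : ℝ} (hγ : 0 < γ) (hL : 0 ≤ L) {ga gb : ℝ → ℂ → ℂ} 
    (ha : Nice (Oa γ) ga) (hb : Nice (Ob γ L) gb) (x lam : ℝ) (l : ℕ) :
    ContDiffAt ℝ l (fun m : ℝ => bl L ga gb x m) lam := by
  have ca := smooth_real (Oa_open γ) (ha.2 x) (Oa_mem hγ lam) l
  by_cases h : |lam| < L + 1
  · refine ca.congr_of_eventuallyEq ?_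
    have : {q : ℝ | |q| < L + 1} ∈ nhds lam :=
      (isOpen_lt (by fun_prop) (by fun_prop)).mem_nhds h
    filter_upwards [this] with q hq
    exact bl_lo hL (le_of_lt hq) ga gb x
  · have cb := smooth_real (Ob_open γ L) (hb.2 x) (Ob_mem hγ (m := lam) (L := L) (by linarith)) l
    have ce := (etaC_smooth L l).contDiffAt (x := lam)
    exact ((contDiffAt_const.sub ce).mul ca).add (ce.mul cb)

theorem eta_bd (L : ℝ) (i : ℕ) : ∃ M : ℝ, 0 ≤ M ∧ ∀ m : ℝ, |m| ≤ L + 2 →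
    ‖iteratedDeriv i (fun m : ℝ => (etaC L m : ℂ)) m‖ ≤ M ∧
    ‖iteratedDeriv i (fun m : ℝ => 1 - (etaC L m : ℂ)) m‖ ≤ M := by
  have c1 : Continuous (iteratedDeriv i (fun m : ℝ => (etaC L m : ℂ))) :=
    (etaC_smooth L i).continuous_iteratedDeriv i le_rfl
  have c2 : Continuous (iteratedDeriv i (fun m : ℝ => 1 - (etaC L m : ℂ))) :=
    (contDiff_const.sub (etaC_smooth L i)).continuous_iteratedDeriv i le_rfl
  obtain ⟨M1, h1⟩ := (isCompact_Icc (a := -(L + 2)) (b := L + 2)).exists_bound_of_continuousOn c1.continuousOn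
  obtain ⟨M2, h2⟩ := (isCompact_Icc (a := -(L + 2)) (b := L + 2)).exists_bound_of_continuousOn c2.continuousOn
  refine ⟨max 0 (max M1 M2), by positivity, fun m hm => ?_⟩
  have hm' : m ∈ Set.Icc (-(L + 2)) (L + 2) := abs_le.1 hm
  exact ⟨(h1 m hm').trans (by simp), (h2 m hm').trans (by simp)⟩

theorem bl_bound {γ L x0 s : ℝ} (hγ : 0 < γ) (hγ1 : γ < 1) (hL : 0 ≤ L) (hx0 : 0 ≤ x0)
    {ga gb : ℝ → ℂ → ℂ} (ha : Sy (Oa γ) x0 0 s γ ga) (hb : Sy (Ob γ L) 0 0 s γ gb) (l : ℕ) :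
    ∃ C, 0 ≤ C ∧ ∀ lam x : ℝ, (x0 ≤ x ∨ (L + 3 ≤ |lam| ∧ 0 ≤ x)) →
      ‖iteratedDeriv l (fun m : ℝ => bl L ga gb x m) lam‖ ≤ C * (1 + |lam|) ^ s * Real.exp (-γ * x) := by
  choose Ca hCa0 hCa using fun i => der_bound (Oa_open γ) ha (r := γ / 16) (by linarith) (by linarith) i
  choose Cb hCb0 hCb using fun i => der_bound (Ob_open γ L) hb (r := γ / 16) (by linarith) (by linarith) i
  choose M hM0 hM using eta_bd L
  have S0 : ∀ D : ℕ → ℝ, (∀ i, 0 ≤ D i) →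
      0 ≤ ∑ i ∈ Finset.range (l + 1), (l.choose i : ℝ) * M i * D (l - i) := fun D hD =>
    Finset.sum_nonneg fun i _ => mul_nonneg (mul_nonneg (by positivity) (hM0 i)) (hD _)
  set Sa := ∑ i ∈ Finset.range (l + 1), (l.choose i : ℝ) * M i * Ca (l - i) with hSa
  set Sb := ∑ i ∈ Finset.range (l + 1), (l.choose i : ℝ) * M i * Cb (l - i) with hSb
  have hSa0 : 0 ≤ Sa := S0 Ca hCa0
  have hSb0 : 0 ≤ Sb := S0 Cb hCb0
  refine ⟨Ca l + Cb l + Sa + Sb, by have := hCa0 l; have := hCb0 l; linarith, fun lam x hx => ?_⟩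
  set E := (1 + |lam|) ^ s * Real.exp (-γ * x) with hE
  have hE0 : 0 ≤ E := by positivity
  have hx' : 0 ≤ x := by rcases hx with h | h; exacts [hx0.trans h, h.2]
  rw [mul_assoc, ← hE]
  have p1 := mul_nonneg (hCa0 l) hE0
  have p2 := mul_nonneg (hCb0 l) hE0
  have p3 := mul_nonneg hSa0 hE0
  have p4 := mul_nonneg hSb0 hE0
  by_cases h1 : L + 2 < |lam|
  · have ev : (fun m : ℝ => bl L ga gb x m) =ᶠ[nhds lam] fun m : ℝ => gb x m := by
      have : {q : ℝ | L + 2 < |q|} ∈ nhds lam :=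
        (isOpen_lt (by fun_prop) (by fun_prop)).mem_nhds h1
      filter_upwards [this] with q hq
      exact bl_hi hL (le_of_lt hq) ga gb x
    rw [ev.iteratedDeriv_eq]
    have := hCb l lam (Ob_ball hγ hγ1 (by linarith)) x hx'
    rw [mul_assoc, ← hE] at this
    linarith
  · have hx0' : x0 ≤ x := by
      rcases hx with h | h
      · exact h
      · linarith [h.1]
    have hA : ∀ i, ‖iteratedDeriv i (fun m : ℝ => ga x m) lam‖ ≤ Ca i * E := fun i => by
      rw [hE, ← mul_assoc]; exact hCa i lam (Oa_ball hγ lam) x hx0'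
    by_cases h2 : |lam| < L + 1
    · have ev : (fun m : ℝ => bl L ga gb x m) =ᶠ[nhds lam] fun m : ℝ => ga x m := by
        have : {q : ℝ | |q| < L + 1} ∈ nhds lam :=
          (isOpen_lt (by fun_prop) (by fun_prop)).mem_nhds h2
        filter_upwards [this] with q hq
        exact bl_lo hL (le_of_lt hq) ga gb x
      rw [ev.iteratedDeriv_eq]
      have := hA l
      linarith
    · have hB : ∀ i, ‖iteratedDeriv i (fun m : ℝ => gb x m) lam‖ ≤ Cb i * E := fun i => by
        rw [hE, ← mul_assoc]; exact hCb i lam (Ob_ball hγ hγ1 (by linarith)) x hx'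
      have ca := smooth_real (Oa_open γ) (ha.1.2 x) (Oa_mem hγ lam) l
      have cb := smooth_real (Ob_open γ L) (hb.1.2 x) (Ob_mem hγ (m := lam) (L := L) (by linarith)) l
      have ce := (etaC_smooth L l).contDiffAt (x := lam)
      have ce' : ContDiffAt ℝ l (fun m : ℝ => 1 - (etaC L m : ℂ)) lam := contDiffAt_const.sub ce
      have q1 := leib hE0 ce' ca (fun i => (hM i lam (by linarith)).2) hA
      have q2 := leib hE0 ce cb (fun i => (hM i lam (by linarith)).1) hB
      have : iteratedDeriv l (fun m : ℝ => bl L ga gb x m) lam =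
          iteratedDeriv l (fun m : ℝ => (1 - (etaC L m : ℂ)) * ga x m) lam
          + iteratedDeriv l (fun m : ℝ => (etaC L m : ℂ) * gb x m) lam :=
        iteratedDeriv_fun_add (ce'.mul ca) (ce.mul cb)
      rw [this]
      refine (norm_add_le _ _).trans ?_
      linarith

theorem bl_iter {γ L : ℝ} (hγ : 0 < γ) (hL : 0 ≤ L) {x0 s x0' s' δ : ℝ} {wa wb : ℝ → ℂ → ℂ} {k : ℕ}
    (ha : Sy (Oa γ) x0 k s δ wa) (hb : Sy (Ob γ L) x0' k s' δ wb) :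
    ∃ ga gb, Sy (Oa γ) x0 0 (s + k) δ ga ∧ Sy (Ob γ L) x0' 0 (s' + k) δ gb ∧
      ∀ m : ℝ, ContDiff ℝ k (fun y => bl L wa wb y m) ∧
        ∀ x, iteratedDeriv k (fun y => bl L wa wb y m) x = bl L ga gb x m := by
  obtain ⟨ga, h1, h2⟩ := ha.iter
  obtain ⟨gb, h3, h4⟩ := hb.iter
  refine ⟨ga, gb, h1, h3, fun m => ?_⟩
  obtain ⟨ca, ia⟩ := h2 m (Oa_mem hγ m)
  by_cases h : |m| ≤ L + 1
  · have e : (fun y => bl L wa wb y m) = fun y => wa y m := funext fun y => bl_lo hL h wa wb y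
    rw [e]
    exact ⟨ca, fun x => by rw [ia, bl_lo hL h]⟩
  · obtain ⟨cb, ib⟩ := h4 m (Ob_mem hγ (by linarith))
    refine ⟨(contDiff_const.mul ca).add (contDiff_const.mul cb), fun x => ?_⟩
    have : iteratedDeriv k (fun y => bl L wa wb y m) x
       = iteratedDeriv k (fun y => (1 - (etaC L m : ℂ)) * wa y m) x
        + iteratedDeriv k (fun y => (etaC L m : ℂ) * wb y m) x :=
      iteratedDeriv_fun_add (contDiff_const.mul ca).contDiffAt (contDiff_const.mul cb).contDiffAt
    rw [this, iteratedDeriv_const_mul _ ca.contDiffAt, iteratedDeriv_const_mul _ cb.contDiffAt, ia, ib]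
    rfl

theorem bl_sol {γ L x0 : ℝ} {V₁ V₂ : ℝ → ℝ} (hγ : 0 < γ) (hL : 0 ≤ L)
    {a1 a2 a1' a2' b1 b2 b1' b2' : ℝ → ℂ → ℂ}
    (ha : Sol (Oa γ) x0 γ V₁ V₂ a1 a2 a1' a2') (hb : Sol (Ob γ L) 0 γ V₁ V₂ b1 b2 b1' b2') (m : ℝ)
    (hs : ContDiff ℝ 2 (fun x : ℝ => Complex.exp (Complex.I * (m : ℂ) * (x : ℂ)) •
      (1 + bl L a1 b1 x m, bl L a2 b2 x m))) :
    IsSolution V₁ V₂ (((1 + m ^ 2 : ℝ) : ℂ))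
      (fun x : ℝ => Complex.exp (Complex.I * (m : ℂ) * (x : ℂ)) •
        (1 + bl L a1 b1 x m, bl L a2 b2 x m)) := by
  have A := Oa_mem hγ m
  by_cases h : |m| ≤ L + 1
  · have e1 : ∀ x, bl L a1 b1 x m = a1 x m := bl_lo hL h a1 b1
    have e2 : ∀ x, bl L a2 b2 x m = a2 x m := bl_lo hL h a2 b2
    simp only [e1, e2] at hs ⊢
    exact sol_of (U1 := fun x => 1 + a1 x m) (U2 := fun x => a2 x m) (U1' := fun x => a1' x m)
      (U2' := fun x => a2' x m) hs (fun x => (ha.d1 _ A x).const_add 1) (fun x => ha.d2 _ A x)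
      (fun x => ha.dd1 _ A x) (fun x => ha.dd2 _ A x)
  · have B : (m : ℂ) ∈ Ob γ L := Ob_mem hγ (by linarith)
    refine sol_of (U1 := fun x => 1 + bl L a1 b1 x m) (U2 := fun x => bl L a2 b2 x m)
      (U1' := fun x => bl L a1' b1' x m) (U2' := fun x => bl L a2' b2' x m) hs (fun x => ?_)
      (fun x => ?_) (fun x => ?_) (fun x => ?_)
    · exact (((ha.d1 _ A x).const_mul _).add ((hb.d1 _ B x).const_mul _)).const_add 1
    · exact ((ha.d2 _ A x).const_mul _).add ((hb.d2 _ B x).const_mul _)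
    · refine (((ha.dd1 _ A x).const_mul (1 - (etaC L m : ℂ))).add
        ((hb.dd1 _ B x).const_mul (etaC L m : ℂ))).congr_deriv ?_
      simp only [bl]; ring
    · refine (((ha.dd2 _ A x).const_mul (1 - (etaC L m : ℂ))).add
        ((hb.dd2 _ B x).const_mul (etaC L m : ℂ))).congr_deriv ?_
      simp only [bl]; ring

theorem stmt_5 (γ : ℝ) (V₁ V₂ : ℝ → ℝ) (hV : PotentialHyp γ V₁ V₂) :
    ∃ x0 lam0 : ℝ, 0 ≤ x0 ∧ 0 ≤ lam0 ∧
      ∃ f₁ : ℝ → ℝ → ℂ × ℂ,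
        ContDiff ℝ (⊤ : ℕ∞) (fun p : ℝ × ℝ => f₁ p.1 p.2) ∧
        (∀ lam : ℝ,
          IsSolution V₁ V₂ (((1 + lam ^ 2 : ℝ) : ℂ)) (fun x => f₁ x lam) ∧
          IsSolution V₁ V₂ (((1 + lam ^ 2 : ℝ) : ℂ)) (conj2 (fun x => f₁ x lam))) ∧
        (∀ k l : ℕ, ∃ C : ℝ,
          (∀ lam x : ℝ, x0 ≤ x →
            ‖iteratedDeriv l
                (fun m : ℝ => iteratedDeriv k
                  (fun y : ℝ => Complex.exp (-Complex.I * (m : ℂ) * (y : ℂ)) • f₁ y m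
                    - ((1 : ℂ), (0 : ℂ))) x) lam‖
              ≤ C * mu lam ^ ((k : ℝ) - 1) * (1 + x) ^ l * Real.exp (-γ * x)) ∧
          (∀ lam x : ℝ, lam0 ≤ |lam| → 0 ≤ x →
            ‖iteratedDeriv l
                (fun m : ℝ => iteratedDeriv k
                  (fun y : ℝ => Complex.exp (-Complex.I * (m : ℂ) * (y : ℂ)) • f₁ y m
                    - ((1 : ℂ), (0 : ℂ))) x) lam‖
              ≤ C * mu lam ^ ((k : ℝ) - 1) * (1 + x) ^ l * Real.exp (-γ * x))) := by
  obtain ⟨x0, L, hx0, hL, ⟨a1, a2, a1', a2', ha⟩, ⟨b1, b2, b1', b2', hb⟩⟩ := exists_sols hV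
  change Sol (Oa γ) x0 γ V₁ V₂ a1 a2 a1' a2' at ha
  change Sol (Ob γ L) 0 γ V₁ V₂ b1 b2 b1' b2' at hb
  have hγ : 0 < γ := hV.1
  have hγ1 : γ < 1 := hV.2.1
  have smooth : ContDiff ℝ (⊤ : ℕ∞) (fun p : ℝ × ℝ =>
      Complex.exp (Complex.I * (p.2 : ℂ) * (p.1 : ℂ)) •
        (1 + bl L a1 b1 p.1 p.2, bl L a2 b2 p.1 p.2)) := by
    rw [contDiff_infty]
    intro n
    have j1 := bl_joint hγ hL (ha.s1 n).niceN (hb.s1 n).niceN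
    have j2 := bl_joint hγ hL (ha.s2 n).niceN (hb.s2 n).niceN
    have c1 : ContDiff ℝ n (fun p : ℝ × ℝ => (p.1 : ℂ)) := Complex.ofRealCLM.contDiff.comp contDiff_fst
    have c2 : ContDiff ℝ n (fun p : ℝ × ℝ => (p.2 : ℂ)) := Complex.ofRealCLM.contDiff.comp contDiff_snd
    have ce : ContDiff ℝ n (fun p : ℝ × ℝ => Complex.exp (Complex.I * (p.2 : ℂ) * (p.1 : ℂ))) :=
      ((contDiff_const.mul c2).mul c1).cexp
    have e : (fun p : ℝ × ℝ =>
      Complex.exp (Complex.I * (p.2 : ℂ) * (p.1 : ℂ)) •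
        (1 + bl L a1 b1 p.1 p.2, bl L a2 b2 p.1 p.2)) = fun p : ℝ × ℝ =>
        (Complex.exp (Complex.I * (p.2 : ℂ) * (p.1 : ℂ)) * (1 + bl L a1 b1 p.1 p.2),
         Complex.exp (Complex.I * (p.2 : ℂ) * (p.1 : ℂ)) * bl L a2 b2 p.1 p.2) := rfl
    rw [e]
    exact (ce.mul (contDiff_const.add j1)).prodMk (ce.mul j2)
  refine ⟨x0, L + 3, hx0, by linarith, fun y m => Complex.exp (Complex.I * (m : ℂ) * (y : ℂ)) •
        (1 + bl L a1 b1 y m, bl L a2 b2 y m), smooth, fun m => ?_, fun k l => ?_⟩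
  · have hs : ContDiff ℝ 2 (fun x : ℝ => Complex.exp (Complex.I * (m : ℂ) * (x : ℂ)) •
      (1 + bl L a1 b1 x m, bl L a2 b2 x m)) := by
      have h1 : ContDiff ℝ (⊤ : ℕ∞) (fun x : ℝ => (x, m)) := contDiff_id.prodMk contDiff_const
      exact_mod_cast contDiff_infty.1 (smooth.comp h1) 2
    have := bl_sol hγ hL ha hb m hs
    exact ⟨this, sol_conj this⟩
  · obtain ⟨ga1, gb1, A1, B1, I1⟩ := bl_iter hγ hL (ha.s1 k) (hb.s1 k)
    obtain ⟨ga2, gb2, A2, B2, I2⟩ := bl_iter hγ hL (ha.s2 k) (hb.s2 k)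
    obtain ⟨C1, hC1, K1⟩ := bl_bound hγ hγ1 hL hx0 A1 B1 l
    obtain ⟨C2, hC2, K2⟩ := bl_bound hγ hγ1 hL hx0 A2 B2 l
    have key : ∀ lam x : ℝ, (x0 ≤ x ∨ (L + 3 ≤ |lam| ∧ 0 ≤ x)) →
        ‖iteratedDeriv l
                (fun m : ℝ => iteratedDeriv k
                  (fun y : ℝ => Complex.exp (-Complex.I * (m : ℂ) * (y : ℂ)) •
                    (Complex.exp (Complex.I * (m : ℂ) * (y : ℂ)) •
                     (1 + bl L a1 b1 y m, bl L a2 b2 y m))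
                    - ((1 : ℂ), (0 : ℂ))) x) lam‖
              ≤ ((C1 + C2) * 2 ^ |(k : ℝ) - 1|) * mu lam ^ ((k : ℝ) - 1) * (1 + x) ^ l
                * Real.exp (-γ * x) := by
      intro lam x hx
      have hx' : 0 ≤ x := by rcases hx with h | h; exacts [hx0.trans h, h.2]
      have e1 : ∀ m : ℝ, (fun y : ℝ => Complex.exp (-Complex.I * (m : ℂ) * (y : ℂ)) •
                    (Complex.exp (Complex.I * (m : ℂ) * (y : ℂ)) •
                     (1 + bl L a1 b1 y m, bl L a2 b2 y m))
                    - ((1 : ℂ), (0 : ℂ))) = fun y => (bl L a1 b1 y m, bl L a2 b2 y m) := by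
        intro m
        funext y
        rw [smul_smul, ← Complex.exp_add]
        have : -Complex.I * (m : ℂ) * (y : ℂ) + Complex.I * (m : ℂ) * (y : ℂ) = 0 := by ring
        rw [this, Complex.exp_zero, one_smul]
        simp
      have e2 : (fun m : ℝ => iteratedDeriv k
                  (fun y : ℝ => Complex.exp (-Complex.I * (m : ℂ) * (y : ℂ)) •
                    (Complex.exp (Complex.I * (m : ℂ) * (y : ℂ)) •
                     (1 + bl L a1 b1 y m, bl L a2 b2 y m))
                    - ((1 : ℂ), (0 : ℂ))) x)
          = fun m : ℝ => (bl L ga1 gb1 x m, bl L ga2 gb2 x m) := by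
        funext m
        rw [e1 m, iter_pair (I1 m).1.contDiffAt (I2 m).1.contDiffAt, (I1 m).2, (I2 m).2]
      rw [e2, iter_pair (bl_smooth hγ hL A1.1 B1.1 x lam l) (bl_smooth hγ hL A2.1 B2.1 x lam l)]
      have q1 := K1 lam x hx
      have q2 := K2 lam x hx
      have hk : (-1 + (k : ℝ)) = (k : ℝ) - 1 := by ring
      rw [hk] at q1 q2
      have P : 0 ≤ (1 + |lam|) ^ ((k : ℝ) - 1) * Real.exp (-γ * x) := by positivity
      have r1 : ‖(iteratedDeriv l (fun m : ℝ => bl L ga1 gb1 x m) lam,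
          iteratedDeriv l (fun m : ℝ => bl L ga2 gb2 x m) lam)‖
          ≤ (C1 + C2) * (1 + |lam|) ^ ((k : ℝ) - 1) * Real.exp (-γ * x) := by
        rw [Prod.norm_def]
        refine max_le (q1.trans ?_) (q2.trans ?_)
        · nlinarith [mul_nonneg hC2 P]
        · nlinarith [mul_nonneg hC1 P]
      refine r1.trans ?_
      have r2 := mu_comp lam ((k : ℝ) - 1)
      have r3 : (1 : ℝ) ≤ (1 + x) ^ l := one_le_pow₀ (by linarith)
      have hmu : 0 ≤ mu lam := Real.sqrt_nonneg _
      calc (C1 + C2) * (1 + |lam|) ^ ((k : ℝ) - 1) * Real.exp (-γ * x)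
          ≤ (C1 + C2) * (2 ^ |(k : ℝ) - 1| * mu lam ^ ((k : ℝ) - 1)) * Real.exp (-γ * x) := by gcongr
        _ = ((C1 + C2) * 2 ^ |(k : ℝ) - 1|) * mu lam ^ ((k : ℝ) - 1) * 1 * Real.exp (-γ * x) := by ring
        _ ≤ _ := by gcongr
    exact ⟨_, fun lam x h => key lam x (Or.inl h), fun lam x h1 h2 => key lam x (Or.inr ⟨h1, h2⟩)⟩
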